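/- arXiv:2006.07850 — 4 statements merged into one kernel-verified Lean document; each statement's English description precedes it below -/
import Mathlib

section
/- Let X be an infinite-dimensional complex Banach space and let T = α·I + S, where α ∈ ℂ, S : X → X is a bounded linear operator, and S^k is a compact operator for some k ≥ 1. Then: σ(T) is a countable set; α ∈ σ(T); every λ ∈ σ(T) with λ ≠ α is an isolated point of σ(T) (so α is the only possible accumulation point of σ(T)); and every λ ∈ σ(T) with λ ≠ α is an eigenvalue of T whose eigenspace ker(λ·I − T) is finite-dimensional. -/
/-!
Up to a translation `T` is `S`. For `c ≠ 0`, a finite geometric sum in `c⁻¹ • S` inverts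
`c • 1 - S` modulo the compact operator `c⁻ᵏ • S ^ k` and commutes with it. Invertibility modulo
compact operators makes the kernel finite-dimensional and, if the kernel is trivial, the range
closed. If an injective `A = c • 1 - S` were not surjective, its iterated ranges would form a
strictly decreasing chain of closed subspaces; if the spectrum of `S` accumulated away from `0`, the
spans of eigenvectors would form a strictly increasing one. On the successive quotients of either
chain a compact operator acts as scalars bounded away from `0`, which Riesz's lemma forbids.
-/

open Filter Module.End Topology
open scoped NNReal

theorem finite_of_totallyBounded_of_pairwise_le_dist {ι M : Type*} [PseudoMetricSpace M]
    {s : Set M} (hs : TotallyBounded s) {y : ι → M} (hy : ∀ i, y i ∈ s) {ε : ℝ} (hε : 0 < ε)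
    (hsep : Pairwise fun i j ↦ ε ≤ dist (y i) (y j)) : Finite ι := by
  obtain ⟨t, -, ht, hst⟩ := Metric.finite_approx_of_totallyBounded hs (ε / 2) (half_pos hε)
  have hcenter (i : ι) : ∃ p : t, dist (y i) p < ε / 2 := by
    simpa using hst (hy i)
  choose p hp using hcenter
  have : Finite t := ht
  refine Finite.of_injective p fun i j hij ↦ ?_
  by_contra hne
  have hclose : dist (y i) (y j) < ε / 2 + ε / 2 :=
    (dist_triangle_right _ _ _).trans_lt (add_lt_add (hp i) (hij ▸ hp j))
  exact (hsep hne).not_gt (by rwa [add_halves] at hclose)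

section NormedSpace

variable {𝕜 X Y : Type*} [NontriviallyNormedField 𝕜] [NormedAddCommGroup X] [NormedSpace 𝕜 X]
  [NormedAddCommGroup Y] [NormedSpace 𝕜 Y]

theorem exists_mem_norm_le_forall_one_le_norm_sub {c : 𝕜} (hc : 1 < ‖c‖) {R : ℝ} (hR : ‖c‖ < R)
    {V W : Submodule 𝕜 X} (hV : IsClosed (V : Set X)) (hVW : V < W) :
    ∃ y ∈ W, ‖y‖ ≤ R ∧ ∀ v ∈ V, 1 ≤ ‖y - v‖ := by
  obtain ⟨hle, x, hxW, hxV⟩ := SetLike.lt_iff_le_and_exists.1 hVW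
  have hclosed : IsClosed (V.comap W.subtype : Set W) := hV.preimage continuous_subtype_val
  obtain ⟨y, hyR, hy⟩ := riesz_lemma_of_norm_lt hc hR hclosed ⟨⟨x, hxW⟩, hxV⟩
  exact ⟨y, y.2, hyR, fun v hv ↦ hy ⟨v, hle hv⟩ hv⟩

theorem finite_of_isCompactOperator_of_chain {ι : Type*} [LinearOrder ι] {K : X →L[𝕜] X}
    (hK : IsCompactOperator K) {V W : ι → Submodule 𝕜 X} (hV : ∀ i, IsClosed (V i : Set X))
    (hVW : ∀ i, V i < W i) (hWV : ∀ ⦃i j⦄, i < j → W i ≤ V j) {μ : ι → 𝕜} {ε : ℝ} (hε : 0 < ε)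
    (hμ : ∀ i, ε ≤ ‖μ i‖) (hKμ : ∀ i, ∀ y ∈ W i, K y - μ i • y ∈ V i) : Finite ι := by
  obtain ⟨c, hc⟩ := NormedField.exists_one_lt_norm 𝕜
  choose y hyW hyR hyV using fun i ↦
    exists_mem_norm_le_forall_one_le_norm_sub hc (lt_add_one ‖c‖) (hV i) (hVW i)
  have hinv (i : ι) : K (y i) ∈ W i := by
    simpa using (W i).add_mem ((hVW i).le (hKμ i _ (hyW i))) ((W i).smul_mem (μ i) (hyW i))
  have hsep {i j : ι} (hij : i < j) : ε ≤ dist (K (y i)) (K (y j)) := by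
    have hμj : μ j ≠ 0 := norm_pos_iff.1 (hε.trans_le (hμ j))
    set v := (μ j)⁻¹ • (K (y i) - (K (y j) - μ j • y j)) with hv
    have hvV : v ∈ V j :=
      (V j).smul_mem _ ((V j).sub_mem (hWV hij (hinv i)) (hKμ j _ (hyW j)))
    calc ε ≤ ‖μ j‖ := hμ j
      _ ≤ ‖μ j‖ * ‖y j - v‖ := le_mul_of_one_le_right (norm_nonneg _) (hyV j v hvV)
      _ = ‖K (y j) - K (y i)‖ := by
        rw [← norm_smul, smul_sub, hv, smul_inv_smul₀ hμj]
        congr 1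
        abel
      _ = dist (K (y i)) (K (y j)) := (dist_eq_norm' _ _).symm
  obtain ⟨C, hC, hKC⟩ := hK.image_closedBall_subset_compact (f := (K : X →ₗ[𝕜] X)) (‖c‖ + 1)
  refine finite_of_totallyBounded_of_pairwise_le_dist hC.totallyBounded (y := fun i ↦ K (y i))
    (fun i ↦ hKC ⟨y i, by simpa using hyR i, rfl⟩) hε fun i j hne ↦ ?_
  rcases hne.lt_or_gt with hij | hji
  · exact hsep hij
  · exact dist_comm (K (y j)) (K (y i)) ▸ hsep hji

theorem finite_of_isCompactOperator_of_linearIndependent [CompleteSpace 𝕜] {ι : Type*}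
    [LinearOrder ι] [LocallyFiniteOrderBot ι] {K : X →L[𝕜] X} (hK : IsCompactOperator K)
    {x : ι → X} (hx : LinearIndependent 𝕜 x) {μ : ι → 𝕜} (hKx : ∀ i, K (x i) = μ i • x i) {ε : ℝ}
    (hε : 0 < ε) (hμ : ∀ i, ε ≤ ‖μ i‖) : Finite ι := by
  let V (i : ι) : Submodule 𝕜 X := Submodule.span 𝕜 (x '' Set.Iio i)
  let W (i : ι) : Submodule 𝕜 X := Submodule.span 𝕜 (x '' Set.Iic i)
  have hV_closed (i : ι) : IsClosed (V i : Set X) := by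
    have := FiniteDimensional.span_of_finite 𝕜 ((Set.finite_Iio i).image x)
    exact (V i).closed_of_finiteDimensional
  have hVW (i : ι) : V i < W i := SetLike.lt_iff_le_and_exists.2
    ⟨Submodule.span_mono (Set.image_mono Set.Iio_subset_Iic_self), x i,
      Submodule.subset_span ⟨i, le_rfl, rfl⟩, hx.notMem_span_image Set.self_notMem_Iio⟩
  have hWV ⦃i j : ι⦄ (hij : i < j) : W i ≤ V j :=
    Submodule.span_mono (Set.image_mono (Set.Iic_subset_Iio.2 hij))
  have hKV (i : ι) : W i ≤ (V i).comap (K - μ i • 1 : X →L[𝕜] X).toLinearMap := by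
    refine Submodule.span_le.2 ?_
    rintro _ ⟨j, hj, rfl⟩
    have hval : (K - μ i • 1 : X →L[𝕜] X) (x j) = (μ j - μ i) • x j := by
      simp [hKx, sub_smul]
    change (K - μ i • 1 : X →L[𝕜] X) (x j) ∈ V i
    rw [hval]
    rcases (Set.mem_Iic.1 hj).lt_or_eq with hji | rfl
    · exact (V i).smul_mem _ (Submodule.subset_span ⟨j, hji, rfl⟩)
    · simp
  exact finite_of_isCompactOperator_of_chain hK hV_closed hVW hWV hε hμ fun i y hy ↦ hKV i hy

theorem finiteDimensional_ker_of_isCompactOperator_one_sub_comp [CompleteSpace 𝕜] {A : X →L[𝕜] Y}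
    {B : Y →L[𝕜] X} (hBA : IsCompactOperator (1 - B ∘L A : X →L[𝕜] X)) :
    FiniteDimensional 𝕜 (LinearMap.ker A.toLinearMap) := by
  set N := LinearMap.ker A.toLinearMap
  have hfix (x : N) : (1 - B ∘L A : X →L[𝕜] X) x = x := by
    have hAx : A x = 0 := x.2
    simp [hAx]
  have hmaps (x : N) : ((1 - B ∘L A : X →L[𝕜] X) ∘ N.subtypeL) x ∈ N := by
    simpa only [Function.comp_apply, Submodule.subtypeL_apply, hfix] using x.2
  have hcompact := (hBA.comp_clm N.subtypeL).codRestrict hmaps A.isClosed_ker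
  have hid : Set.codRestrict ((1 - B ∘L A : X →L[𝕜] X) ∘ N.subtypeL) N hmaps = id :=
    funext fun x ↦ Subtype.ext (hfix x)
  exact .of_isCompactOperator_id (𝕜 := 𝕜) (hid ▸ hcompact)

theorem exists_antilipschitzWith_of_isCompactOperator_one_sub_comp {A : X →L[𝕜] Y} {B : Y →L[𝕜] X}
    (hBA : IsCompactOperator (1 - B ∘L A : X →L[𝕜] X)) (hA : Function.Injective A) :
    ∃ C : ℝ≥0, AntilipschitzWith C A := by
  rw [antilipschitzWith_iff_exists_mul_le_norm]
  by_contra! hsmall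
  obtain ⟨c, hc⟩ := NormedField.exists_one_lt_norm 𝕜
  have hc0 : 0 < ‖c‖⁻¹ := inv_pos.2 (one_pos.trans hc)
  have hshell (n : ℕ) : ∃ x, ‖x‖ ≤ 1 ∧ ‖c‖⁻¹ ≤ ‖x‖ ∧ ‖A x‖ ≤ 1 / ((n : ℝ) + 1) := by
    obtain ⟨x, hx⟩ := hsmall (1 / ((n : ℝ) + 1)) Nat.one_div_pos_of_nat
    have hx0 : x ≠ 0 := by rintro rfl; simp at hx
    obtain ⟨d, -, hd1, hcd, -⟩ := rescale_to_shell hc one_pos hx0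
    refine ⟨d • x, hd1.le, by simpa using hcd, ?_⟩
    calc ‖A (d • x)‖ = ‖d‖ * ‖A x‖ := by rw [map_smul, norm_smul]
      _ ≤ ‖d‖ * (1 / ((n : ℝ) + 1) * ‖x‖) := by gcongr
      _ = 1 / ((n : ℝ) + 1) * ‖d • x‖ := by rw [norm_smul]; ring
      _ ≤ 1 / ((n : ℝ) + 1) := mul_le_of_le_one_right (by positivity) hd1.le
  choose x hx1 hcx hAx using hshell
  have hAlim : Tendsto (fun n ↦ A (x n)) atTop (𝓝 0) :=
    squeeze_zero_norm hAx tendsto_one_div_add_atTop_nhds_zero_nat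
  obtain ⟨C, hC, hBC⟩ :=
    hBA.image_closedBall_subset_compact (f := ((1 - B ∘L A : X →L[𝕜] X) : X →ₗ[𝕜] X)) 1
  obtain ⟨z, -, φ, hφ, hz⟩ := hC.tendsto_subseq (x := fun n ↦ (1 - B ∘L A) (x n))
    fun n ↦ hBC ⟨x n, by simpa using hx1 n, rfl⟩
  have hAφ : Tendsto (fun n ↦ A (x (φ n))) atTop (𝓝 0) := hAlim.comp hφ.tendsto_atTop
  have hxlim : Tendsto (fun n ↦ x (φ n)) atTop (𝓝 z) := by
    simpa [Function.comp_def] using hz.add ((B.continuous.tendsto 0).comp hAφ)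
  have hAz : A z = 0 := tendsto_nhds_unique ((A.continuous.tendsto z).comp hxlim) hAφ
  have hz0 : z = 0 := hA (hAz.trans (map_zero A).symm)
  exact hc0.not_ge (by simpa [hz0] using ge_of_tendsto' hxlim.norm fun n ↦ hcx (φ n))

section CompleteSpace

variable [CompleteSpace X]

theorem isUnit_of_injective_of_isCompactOperator_one_sub_mul {A B : X →L[𝕜] X} (hAB : Commute A B)
    (hBA : IsCompactOperator (1 - B * A : X →L[𝕜] X)) (hA : Function.Injective A) : IsUnit A := by
  refine ContinuousLinearMap.isUnit_iff_bijective.2 ⟨hA, ?_⟩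
  by_contra hsurj
  obtain ⟨C, hC⟩ := exists_antilipschitzWith_of_isCompactOperator_one_sub_comp hBA hA
  let V (n : ℕ) : Submodule 𝕜 X := LinearMap.iterateRange (A : Module.End 𝕜 X) n
  have hV_zero : V 0 = ⊤ := LinearMap.range_id
  have hV_succ (n : ℕ) : V (n + 1) = (V n).map (A : Module.End 𝕜 X) := LinearMap.iterateRange_succ
  have hV_anti : Antitone V := (LinearMap.iterateRange (A : Module.End 𝕜 X)).monotone
  have hV_closed (n : ℕ) : IsClosed (V n : Set X) := by
    induction n with
    | zero => simp [hV_zero]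
    | succ n ih => simpa [hV_succ] using (hC.isClosedEmbedding A.uniformContinuous).isClosedMap _ ih
  have hV_lt (n : ℕ) : V (n + 1) < V n := by
    induction n with
    | zero => simpa [hV_succ, hV_zero, lt_top_iff_ne_top, LinearMap.range_eq_top] using hsurj
    | succ n ih => simpa only [hV_succ] using Submodule.map_strictMono_of_injective hA ih
  have hBV (n : ℕ) : ∀ x ∈ V n, B x ∈ V n := by
    induction n with
    | zero => simp [hV_zero]
    | succ n ih =>
      rw [hV_succ]
      rintro _ ⟨x, hx, rfl⟩
      exact ⟨B x, ih x hx, congr($hAB.eq x)⟩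
  have hBAV (n : ℕ) (x : X) (hx : x ∈ V n) :
      (1 - B * A : X →L[𝕜] X) x - (1 : 𝕜) • x ∈ V (n + 1) := by
    rw [hV_succ]
    exact ⟨-B x, (V n).neg_mem (hBV n x hx), by simpa using congr($hAB.eq x)⟩
  have : Finite ℕᵒᵈ := finite_of_isCompactOperator_of_chain hBA
    (V := fun n ↦ V (n.ofDual + 1)) (W := fun n ↦ V n.ofDual) (fun n ↦ hV_closed _)
    (fun n ↦ hV_lt _) (fun m n hmn ↦ hV_anti (Nat.succ_le_of_lt hmn)) (μ := fun _ ↦ 1)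
    one_pos (fun _ ↦ by simp) (fun n ↦ hBAV _)
  exact not_finite ℕᵒᵈ

end CompleteSpace

section PowerCompact

variable {S : X →L[𝕜] X} {k : ℕ}

theorem exists_commute_isCompactOperator_one_sub_mul (hS : IsCompactOperator (S ^ k : X →L[𝕜] X))
    {c : 𝕜} (hc : c ≠ 0) :
    ∃ B : X →L[𝕜] X, Commute (c • 1 - S) B ∧
      IsCompactOperator (1 - B * (c • 1 - S) : X →L[𝕜] X) := by
  have hfactor : c • 1 - S = c • (1 - c⁻¹ • S) := by rw [smul_sub, smul_inv_smul₀ hc]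
  have hright : (c • 1 - S) * (c⁻¹ • ∑ i ∈ Finset.range k, (c⁻¹ • S) ^ i) = 1 - (c⁻¹ • S) ^ k := by
    rw [hfactor, smul_mul_smul_comm, mul_inv_cancel₀ hc, one_smul, mul_neg_geom_sum]
  have hleft : (c⁻¹ • ∑ i ∈ Finset.range k, (c⁻¹ • S) ^ i) * (c • 1 - S) = 1 - (c⁻¹ • S) ^ k := by
    rw [hfactor, smul_mul_smul_comm, inv_mul_cancel₀ hc, one_smul, geom_sum_mul_neg]
  refine ⟨_, hright.trans hleft.symm, ?_⟩
  rw [hleft, sub_sub_cancel, smul_pow]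
  exact hS.smul (c⁻¹ ^ k)

theorem finiteDimensional_ker_smul_one_sub [CompleteSpace 𝕜]
    (hS : IsCompactOperator (S ^ k : X →L[𝕜] X)) {c : 𝕜} (hc : c ≠ 0) :
    FiniteDimensional 𝕜 (LinearMap.ker (c • (1 : X →L[𝕜] X) - S).toLinearMap) :=
  have ⟨_, _, hB⟩ := exists_commute_isCompactOperator_one_sub_mul hS hc
  finiteDimensional_ker_of_isCompactOperator_one_sub_comp hB

theorem zero_mem_spectrum_of_isCompactOperator_pow [CompleteSpace 𝕜]
    (hX : ¬ FiniteDimensional 𝕜 X) (hS : IsCompactOperator (S ^ k : X →L[𝕜] X)) :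
    (0 : 𝕜) ∈ spectrum 𝕜 S := by
  rw [spectrum.zero_mem_iff]
  intro hunit
  obtain ⟨R, hR⟩ := (hunit.pow k).exists_left_inv
  refine hX (.of_isCompactOperator_id (𝕜 := 𝕜) ?_)
  have hid : R ∘ (S ^ k : X →L[𝕜] X) = id := funext fun x ↦ congr($hR x)
  exact hid ▸ hS.clm_comp R

variable [CompleteSpace X]

theorem hasEigenvalue_of_mem_spectrum_of_isCompactOperator_pow
    (hS : IsCompactOperator (S ^ k : X →L[𝕜] X)) {c : 𝕜} (hc : c ≠ 0) (hcS : c ∈ spectrum 𝕜 S) :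
    HasEigenvalue (S : Module.End 𝕜 X) c := by
  obtain ⟨B, hcomm, hB⟩ := exists_commute_isCompactOperator_one_sub_mul hS hc
  by_contra hne
  refine hcS ?_
  rw [spectrum.mem_resolventSet_iff, Algebra.algebraMap_eq_smul_one]
  refine isUnit_of_injective_of_isCompactOperator_one_sub_mul hcomm hB ?_
  refine (injective_iff_map_eq_zero _).2 fun x hx ↦ ?_
  by_contra hx0
  refine hne (hasEigenvalue_of_hasEigenvector (x := x) ⟨mem_eigenspace_iff.2 ?_, hx0⟩)
  exact (sub_eq_zero.1 hx).symm

variable [CompleteSpace 𝕜]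

theorem finite_setOf_mem_spectrum_le_norm (hS : IsCompactOperator (S ^ k : X →L[𝕜] X)) {ε : ℝ}
    (hε : 0 < ε) : {c ∈ spectrum 𝕜 S | ε ≤ ‖c‖}.Finite := by
  by_contra hinf
  let g : ℕ ↪ {c ∈ spectrum 𝕜 S | ε ≤ ‖c‖} := Set.Infinite.natEmbedding _ hinf
  let c (n : ℕ) : 𝕜 := g n
  have hcε (n : ℕ) : ε ≤ ‖c n‖ := (g n).2.2
  choose x hx using fun n ↦ (hasEigenvalue_of_mem_spectrum_of_isCompactOperator_pow hS
    (norm_pos_iff.1 (hε.trans_le (hcε n))) (g n).2.1).exists_hasEigenvector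
  have hli : LinearIndependent 𝕜 x :=
    eigenvectors_linearIndependent' _ c (Subtype.val_injective.comp g.injective) x hx
  have hSx (n : ℕ) : (S ^ k) (x n) = c n ^ k • x n := by
    rw [← ContinuousLinearMap.coe_coe, ContinuousLinearMap.toLinearMap_pow]
    exact (hx n).pow_apply k
  have : Finite ℕ := finite_of_isCompactOperator_of_linearIndependent hS hli hSx (pow_pos hε k)
    fun n ↦ by rw [norm_pow]; gcongr; exact hcε n
  exact not_finite ℕ

theorem countable_spectrum_of_isCompactOperator_pow (hS : IsCompactOperator (S ^ k : X →L[𝕜] X)) :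
    (spectrum 𝕜 S).Countable := by
  have hcover : spectrum 𝕜 S ⊆
      {0} ∪ ⋃ n : ℕ, {c ∈ spectrum 𝕜 S | 1 / ((n : ℝ) + 1) ≤ ‖c‖} := by
    intro c hc
    rcases eq_or_ne c 0 with rfl | hc0
    · exact .inl rfl
    · obtain ⟨n, hn⟩ := exists_nat_one_div_lt (norm_pos_iff.2 hc0)
      exact .inr (Set.mem_iUnion.2 ⟨n, hc, hn.le⟩)
  refine .mono hcover ((Set.countable_singleton 0).union (Set.countable_iUnion fun n ↦ ?_))
  exact (finite_setOf_mem_spectrum_le_norm hS Nat.one_div_pos_of_nat).countable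

theorem eventually_mem_spectrum_imp_eq (hS : IsCompactOperator (S ^ k : X →L[𝕜] X)) {c : 𝕜}
    (hc : c ≠ 0) : ∀ᶠ z in 𝓝 c, z ∈ spectrum 𝕜 S → z = c := by
  have hpos : 0 < ‖c‖ := norm_pos_iff.2 hc
  have hfin : ({z ∈ spectrum 𝕜 S | ‖c‖ / 2 ≤ ‖z‖} \ {c}).Finite :=
    (finite_setOf_mem_spectrum_le_norm hS (half_pos hpos)).sdiff
  filter_upwards [hfin.isClosed.compl_mem_nhds fun h ↦ h.2 rfl,
    continuous_norm.tendsto c |>.eventually_const_le (half_lt_self hpos)] with z hz hcz hzS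
  by_contra hne
  exact hz ⟨⟨hzS, hcz⟩, hne⟩

theorem spectrum_scalar_plus_compact_power_general (hX : ¬ FiniteDimensional 𝕜 X) (α : 𝕜)
    (hS : IsCompactOperator (S ^ k : X →L[𝕜] X)) :
    (spectrum 𝕜 (α • 1 + S)).Countable ∧
    α ∈ spectrum 𝕜 (α • 1 + S) ∧
    (∀ lam ∈ spectrum 𝕜 (α • 1 + S), lam ≠ α →
      ∃ U ∈ 𝓝 lam, ∀ μ ∈ spectrum 𝕜 (α • 1 + S), μ ∈ U → μ = lam) ∧
    (∀ lam ∈ spectrum 𝕜 (α • 1 + S), lam ≠ α →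
      (∃ x : X, x ≠ 0 ∧ (α • 1 + S) x = lam • x) ∧
      FiniteDimensional 𝕜 (LinearMap.ker (lam • 1 - (α • 1 + S)).toLinearMap)) := by
  have hmem (z : 𝕜) : z ∈ spectrum 𝕜 (α • 1 + S) ↔ z - α ∈ spectrum 𝕜 S := by
    rw [← spectrum.add_mem_add_iff (r := z - α) (s := α), sub_add_cancel,
      Algebra.algebraMap_eq_smul_one]
  refine ⟨?_, ?_, fun lam _ hne ↦ ?_, fun lam hlam hne ↦ ⟨?_, ?_⟩⟩
  · exact ((countable_spectrum_of_isCompactOperator_pow hS).preimage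
      (sub_left_injective (b := α))).mono fun z hz ↦ (hmem z).1 hz
  · simpa only [hmem, sub_self] using zero_mem_spectrum_of_isCompactOperator_pow hX hS
  · obtain ⟨U, hU, hiso⟩ := ((continuous_sub_right α).tendsto lam |>.eventually
      (eventually_mem_spectrum_imp_eq hS (sub_ne_zero.2 hne))).exists_mem
    exact ⟨U, hU, fun μ hμ hμU ↦ sub_left_injective (hiso μ hμU ((hmem μ).1 hμ))⟩
  · obtain ⟨x, hx⟩ := (hasEigenvalue_of_mem_spectrum_of_isCompactOperator_pow hS
      (sub_ne_zero.2 hne) ((hmem lam).1 hlam)).exists_hasEigenvector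
    have hSx : S x = (lam - α) • x := hx.apply_eq_smul
    exact ⟨x, hx.2, by simp [hSx, sub_smul]⟩
  · rw [← sub_sub, ← sub_smul]
    exact finiteDimensional_ker_smul_one_sub hS (sub_ne_zero.2 hne)

end PowerCompact

end NormedSpace

/-- Let `X` be an infinite-dimensional complex Banach space and
`T = α·I + S` with `S^k` compact for some `k ≥ 1`. Then `σ(T)` is countable,
`α ∈ σ(T)`, every `λ ≠ α` in `σ(T)` is an isolated point of `σ(T)`, and every
`λ ≠ α` in `σ(T)` is an eigenvalue of `T` with finite-dimensional eigenspace. -/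
theorem spectrum_scalar_plus_compact_power {X : Type*} [NormedAddCommGroup X]
    [NormedSpace ℂ X] [CompleteSpace X] (hX : ¬ FiniteDimensional ℂ X)
    (α : ℂ) (S : X →L[ℂ] X) (k : ℕ) (hk : 1 ≤ k)
    (hS : IsCompactOperator (S ^ k : X →L[ℂ] X))
    (T : X →L[ℂ] X) (hT : T = α • (1 : X →L[ℂ] X) + S) :
    (spectrum ℂ T).Countable ∧
    α ∈ spectrum ℂ T ∧
    (∀ lam ∈ spectrum ℂ T, lam ≠ α →
      ∃ U ∈ nhds lam, ∀ μ ∈ spectrum ℂ T, μ ∈ U → μ = lam) ∧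
    (∀ lam ∈ spectrum ℂ T, lam ≠ α →
      (∃ x : X, x ≠ 0 ∧ T x = lam • x) ∧
      FiniteDimensional ℂ (LinearMap.ker (lam • (1 : X →L[ℂ] X) - T).toLinearMap)) := by
  subst hT
  exact spectrum_scalar_plus_compact_power_general hX α hS
end

section
/- Let T be a power-bounded operator on a complex Banach space X, and assume that σ(T) ∩ 𝕋 is countable, where 𝕋 = {λ ∈ ℂ : |λ| = 1}. Then for every x ∈ X the following are equivalent: (i) there exists a strictly increasing sequence of natural numbers (n_j) such that T^{n_j} x → 0 weakly, i.e., ⟨x*, T^{n_j} x⟩ → 0 for every x* ∈ X*; (ii) (1/n) ∑_{k=1}^n |⟨x*, T^k x⟩| → 0 as n → ∞, for every x* ∈ X*; (iii) ‖Tⁿ x‖ → 0 as n → ∞. -/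
open Filter Finset

/-!
Suppose `‖T ^ n x‖ ↛ 0`. Composing norming functionals of `T ^ m x` with `T ^ (m - j)` and taking
weak-* limits along an ultrafilter in `m` yields a bounded backward orbit `χ (j + 1) ∘ T = χ j` with
`χ 0 x ≠ 0`. Together with the forward orbit `χ 0 ∘ T ^ n` it forms a bounded two-sided sequence,
whose Carleman transform `G` at `x` is holomorphic off `K = σ(T) ∩ 𝕋` and satisfies
`‖G z‖ * |‖z‖ - 1| ≤ M`. This growth makes every isolated singularity of `G` on `𝕋` at worst a
simple pole, and the residue at such a point `l` is `c x` for some functional `c` satisfying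
`c ∘ T = l c`. If all these `c x` vanish, isolated singularities are removable; a nonempty closed
countable set has an isolated point, so no singularity is left. Thus `G` extends to an entire
function vanishing at infinity, so `G = 0`, contradicting `G 0 = -χ 0 x ≠ 0`.

Each of the conditions (i) and (ii) forces `c x = 0`, because `n ↦ ‖c (T ^ n x)‖` is constant.
-/

open scoped Topology

section Topology

theorem exists_mem_eventually_nhdsNE_notMem_of_countable {α : Type*} [TopologicalSpace α]
    [TopologicalSpace.IsCompletelyMetrizableSpace α] {S : Set α} (hS : IsClosed S)
    (hcount : S.Countable) (hne : S.Nonempty) : ∃ a ∈ S, ∀ᶠ z in 𝓝[≠] a, z ∉ S := by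
  have := hS.isCompletelyMetrizableSpace
  have := hcount.to_subtype
  have := hne.to_subtype
  obtain ⟨a, b, hb⟩ := nonempty_interior_of_iUnion_of_closed (fun a : S => isClosed_singleton)
    (Set.iUnion_of_singleton S)
  obtain rfl : b = a := Set.mem_singleton_iff.1 (interior_subset hb)
  refine ⟨b, b.2, eventually_nhdsWithin_iff.2 ?_⟩
  have hnear : ∀ᶠ z : S in 𝓝 b, z = b := mem_interior_iff_mem_nhds.1 hb
  rw [nhds_subtype_eq_comap, eventually_comap] at hnear
  filter_upwards [hnear] with z hz hzb hzS
  exact hzb (congrArg Subtype.val (hz ⟨z, hzS⟩ rfl))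

theorem extendFrom_eventuallyEq {α β : Type*} [TopologicalSpace α] [TopologicalSpace β] [T2Space β]
    {U : Set α} (hU : Dense U) {f g : α → β} {a : α} (hg : ∀ᶠ z in 𝓝 a, ContinuousAt g z)
    (hfg : f =ᶠ[𝓝[U] a] g) : extendFrom U f =ᶠ[𝓝 a] g := by
  filter_upwards [hg, eventually_eventually_nhds.2 (eventually_nhdsWithin_iff.1 hfg)] with z hgz hz
  exact extendFrom_eq (hU z) ((hgz.tendsto.mono_left nhdsWithin_le_nhds).congr'
    (EventuallyEq.symm (eventually_nhdsWithin_iff.2 hz)))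

end Topology

section Singularities

open Metric

theorem tendsto_cocompact_zero_of_norm_mul_abs_le {V E : Type*} [SeminormedAddCommGroup V]
    [ProperSpace V] [SeminormedAddCommGroup E] {f : V → E} {M : ℝ}
    (hM : ∀ z, ‖f z‖ * |‖z‖ - 1| ≤ M) : Tendsto f (cocompact V) (𝓝 0) := by
  have hlim : Tendsto (fun z : V => M / (‖z‖ - 1)) (cocompact V) (𝓝 0) :=
    (tendsto_atTop_add_const_right _ _ tendsto_norm_cocompact_atTop).const_div_atTop M
  refine squeeze_zero_norm' ?_ hlim
  filter_upwards [tendsto_norm_cocompact_atTop.eventually (eventually_gt_atTop 1)] with z hz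
  have hz_pos : 0 < ‖z‖ - 1 := sub_pos.2 hz
  rw [le_div_iff₀ hz_pos]
  simpa only [abs_of_pos hz_pos] using hM z

variable {E : Type*} [NormedAddCommGroup E] [NormedSpace ℂ E]

theorem norm_le_of_norm_mul_abs_norm_sub_one_le {f : ℂ → E} {z₀ : ℂ} {r M : ℝ} (hr : 0 < r)
    (hf : DiffContOnCl ℂ f (ball z₀ r)) (hM : ∀ z ∈ sphere z₀ r, ‖f z‖ * |‖z‖ - 1| ≤ M) :
    r * ‖z₀‖ * ‖f z₀‖ ≤ (‖z₀‖ + r + 1) * M := by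
  -- `Q z = (z - z₀) * (‖z‖ ^ 2 - 1)` on the sphere, where `(z - z₀) * conj (z - z₀) = r ^ 2`, so
  -- the polynomial `Q` is a holomorphic substitute for the weight `|‖z‖ - 1|`.
  let Q : ℂ → ℂ := fun z => (z - z₀) * (z * (starRingEnd ℂ) z₀ - 1) + r ^ 2 * z
  have hQ : ∀ z ∈ sphere z₀ r, ‖Q z‖ = r * ((‖z‖ + 1) * |‖z‖ - 1|) := by
    intro z hz
    have hconj : (z - z₀) * (starRingEnd ℂ) (z - z₀) = (r : ℂ) ^ 2 := by
      rw [Complex.mul_conj', mem_sphere_iff_norm.1 hz]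
    have hfactor : Q z = (z - z₀) * (((‖z‖ + 1) * (‖z‖ - 1) : ℝ) : ℂ) := by
      have hsq : (((‖z‖ + 1) * (‖z‖ - 1) : ℝ) : ℂ) = z * (starRingEnd ℂ) z - 1 := by
        rw [Complex.mul_conj']; push_cast; ring
      simp only [Q]
      rw [hsq, ← hconj, map_sub]
      ring
    rw [hfactor, norm_mul, mem_sphere_iff_norm.1 hz, Complex.norm_real, Real.norm_eq_abs, abs_mul,
      abs_of_pos (by positivity : 0 < ‖z‖ + 1)]
  have hQf : DiffContOnCl ℂ (fun z => Q z • f z) (ball z₀ r) :=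
    (Differentiable.diffContOnCl (by fun_prop)).smul hf
  have hfrontier : ∀ z ∈ frontier (ball z₀ r), ‖Q z • f z‖ ≤ r * ((‖z₀‖ + r + 1) * M) := by
    rw [frontier_ball _ hr.ne']
    intro z hz
    have hz_norm : ‖z‖ ≤ ‖z₀‖ + r := by
      simpa [mem_sphere_iff_norm.1 hz] using norm_le_norm_add_norm_sub' z z₀
    calc ‖Q z • f z‖ = r * ((‖z‖ + 1) * (‖f z‖ * |‖z‖ - 1|)) := by rw [norm_smul, hQ z hz]; ring
      _ ≤ r * ((‖z₀‖ + r + 1) * M) := by gcongr; exact hM z hz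
  have hcenter := Complex.norm_le_of_forall_mem_frontier_norm_le isBounded_ball hQf hfrontier
    (subset_closure (mem_ball_self hr))
  have hQ₀ : ‖Q z₀ • f z₀‖ = r * (r * ‖z₀‖ * ‖f z₀‖) := by
    have hQz : ‖Q z₀‖ = r ^ 2 * ‖z₀‖ := by simp [Q]
    rw [norm_smul, hQz]
    ring
  exact le_of_mul_le_mul_left (hQ₀ ▸ hcenter) hr

theorem eventually_norm_sub_smul_le {f : ℂ → E} {l : ℂ} {M : ℝ} (hl : ‖l‖ = 1)
    (hd : ∀ᶠ z in 𝓝[≠] l, DifferentiableAt ℂ f z) (hM : ∀ z, ‖f z‖ * |‖z‖ - 1| ≤ M) :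
    ∀ᶠ z in 𝓝[≠] l, ‖(z - l) • f z‖ ≤ 11 * M := by
  obtain ⟨ρ, hρ, hdiff⟩ := Metric.eventually_nhds_iff.1 (eventually_nhdsWithin_iff.1 hd)
  rw [eventually_nhdsWithin_iff]
  filter_upwards [ball_mem_nhds l (by positivity : 0 < min (ρ / 2) (1 / 2))] with z hz hzl
  obtain ⟨hzρ, hz_half⟩ := lt_min_iff.1 (mem_ball.1 hz)
  have hdist : 0 < dist z l := dist_pos.2 hzl
  have hM0 : 0 ≤ M := (by positivity : (0 : ℝ) ≤ _).trans (hM 0)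
  have hf : DifferentiableOn ℂ f (closedBall z (dist z l / 2)) := by
    intro w hw
    have hwz : dist w z ≤ dist z l / 2 := hw
    refine (hdiff ?_ ?_).differentiableWithinAt
    · linarith [dist_triangle w z l]
    · rintro rfl
      rw [dist_comm] at hwz
      linarith
  have hcenter := norm_le_of_norm_mul_abs_norm_sub_one_le (half_pos hdist)
    (hf.diffContOnCl_ball subset_rfl) fun w _ => hM w
  have hz_upper : ‖z‖ ≤ 3 / 2 := by
    linarith [norm_le_norm_add_norm_sub' z l, dist_eq_norm z l]
  have hz_lower : 1 / 2 ≤ ‖z‖ := by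
    linarith [norm_le_norm_add_norm_sub' l z, dist_eq_norm l z, dist_comm z l]
  have hbound : dist z l / 2 * (1 / 2) * ‖f z‖ ≤ (3 / 2 + 1 / 4 + 1) * M :=
    calc dist z l / 2 * (1 / 2) * ‖f z‖ ≤ dist z l / 2 * ‖z‖ * ‖f z‖ := by gcongr
      _ ≤ (‖z‖ + dist z l / 2 + 1) * M := hcenter
      _ ≤ (3 / 2 + 1 / 4 + 1) * M := mul_le_mul_of_nonneg_right (by linarith) hM0
  rw [norm_smul, ← dist_eq_norm]
  linarith

theorem tendsto_ofReal_mul_nhdsGT_one_nhdsNE {l : ℂ} (hl : l ≠ 0) :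
    Tendsto (fun r : ℝ => (r : ℂ) * l) (𝓝[>] 1) (𝓝[≠] l) := by
  refine tendsto_nhdsWithin_iff.2 ⟨tendsto_nhdsWithin_of_tendsto_nhds ?_, ?_⟩
  · simpa using (by fun_prop : Continuous fun r : ℝ => (r : ℂ) * l).tendsto 1
  · filter_upwards [self_mem_nhdsWithin] with r hr hrl
    exact (Set.mem_Ioi.1 hr).ne' (by simpa [hl] using hrl)

theorem norm_ofReal_mul_of_norm_eq_one {r : ℝ} (hr : 0 ≤ r) {l : ℂ} (hl : ‖l‖ = 1) :
    ‖(r : ℂ) * l‖ = r := by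
  rw [norm_mul, hl, mul_one, Complex.norm_of_nonneg hr]

theorem extendFrom_compl_eq {f : ℂ → E} {K : Set ℂ} (hcount : K.Countable)
    (hf : ∀ z ∉ K, DifferentiableAt ℂ f z) : ∀ z ∉ K, extendFrom Kᶜ f z = f z := fun z hz =>
  extendFrom_eq (hcount.dense_compl ℂ z)
    ((hf z hz).continuousAt.tendsto.mono_left nhdsWithin_le_nhds)

variable [CompleteSpace E]

theorem exists_analyticAt_eventuallyEq_of_tendsto_sub_smul {f : ℂ → E} {c : ℂ}
    (hd : ∀ᶠ z in 𝓝[≠] c, DifferentiableAt ℂ f z)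
    (hlim : Tendsto (fun z => (z - c) • f z) (𝓝[≠] c) (𝓝 0)) :
    ∃ g : ℂ → E, AnalyticAt ℂ g c ∧ f =ᶠ[𝓝[≠] c] g := by
  let F : ℂ → E := fun z => (z - c) • f z
  have hF : AnalyticAt ℂ F c := by
    refine Complex.analyticAt_of_differentiable_on_punctured_nhds_of_continuousAt ?_ ?_
    · filter_upwards [hd] with z hz
      exact (differentiableAt_id.sub_const c).smul hz
    · rw [← continuousWithinAt_compl_self]
      simpa [ContinuousWithinAt, F] using hlim
  obtain ⟨p, hp⟩ := hF
  refine ⟨dslope F c, hp.has_fpower_series_dslope_fslope.analyticAt, ?_⟩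
  filter_upwards [self_mem_nhdsWithin] with z hz
  exact (dslope_sub_smul_of_ne f hz).symm

theorem tendsto_sub_smul_zero_of_radial {f : ℂ → E} {l : ℂ} {M : ℝ} (hl : ‖l‖ = 1)
    (hd : ∀ᶠ z in 𝓝[≠] l, DifferentiableAt ℂ f z) (hM : ∀ z, ‖f z‖ * |‖z‖ - 1| ≤ M)
    (hrad : Tendsto (fun r : ℝ => ((r : ℂ) - 1) • f (r * l)) (𝓝[>] 1) (𝓝 0)) :
    Tendsto (fun z => (z - l) • f z) (𝓝[≠] l) (𝓝 0) := by
  have hl0 : l ≠ 0 := norm_ne_zero_iff.1 (hl ▸ one_ne_zero)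
  have hlim := Complex.tendsto_limUnder_of_differentiable_on_punctured_nhds_of_bounded_under
    (f := fun z => (z - l) • f z)
    (hd.mono fun z hz => (differentiableAt_id.sub_const l).smul hz)
    ⟨11 * M, eventually_map.2 <| (eventually_norm_sub_smul_le hl hd hM).mono fun z hz => by
      simpa using hz⟩
  have hradial : Tendsto (fun r : ℝ => ((r : ℂ) * l - l) • f (r * l)) (𝓝[>] 1) (𝓝 0) := by
    have hsmul := hrad.const_smul l
    rw [smul_zero] at hsmul
    refine hsmul.congr fun r => ?_
    rw [smul_smul, mul_sub, mul_one, mul_comm l]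
  rwa [tendsto_nhds_unique (hlim.comp (tendsto_ofReal_mul_nhdsGT_one_nhdsNE hl0)) hradial] at hlim

theorem differentiable_extendFrom_compl_of_countable {f : ℂ → E} {K : Set ℂ} (hK : IsClosed K)
    (hcount : K.Countable) (hf : ∀ z ∉ K, DifferentiableAt ℂ f z)
    (hisolated : ∀ l ∈ K, (∀ᶠ z in 𝓝[≠] l, DifferentiableAt ℂ (extendFrom Kᶜ f) z) →
      Tendsto (fun z => (z - l) • extendFrom Kᶜ f z) (𝓝[≠] l) (𝓝 0)) :
    Differentiable ℂ (extendFrom Kᶜ f) := by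
  have hanalytic : ∀ {g : ℂ → E} {z : ℂ}, AnalyticAt ℂ g z → f =ᶠ[𝓝[Kᶜ] z] g →
      AnalyticAt ℂ (extendFrom Kᶜ f) z := fun hg hfg => hg.congr
    (extendFrom_eventuallyEq (hcount.dense_compl ℂ)
      (hg.eventually_analyticAt.mono fun _ h => h.continuousAt) hfg).symm
  let S : Set ℂ := {z | AnalyticAt ℂ (extendFrom Kᶜ f) z}ᶜ
  have hSK : S ⊆ K := fun z hzS => not_not.1 fun hzK => hzS <|
    hanalytic (Complex.analyticAt_iff_eventually_differentiableAt.2 <|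
      (hK.isOpen_compl.eventually_mem hzK).mono hf) EventuallyEq.rfl
  suffices hS : ¬ S.Nonempty from fun z =>
    (not_not.1 fun hz => hS ⟨z, hz⟩ : AnalyticAt ℂ _ z).differentiableAt
  intro hne
  obtain ⟨l, hlS, hl⟩ := exists_mem_eventually_nhdsNE_notMem_of_countable
    (isOpen_analyticAt ℂ _).isClosed_compl (hcount.mono hSK) hne
  have hd : ∀ᶠ z in 𝓝[≠] l, DifferentiableAt ℂ (extendFrom Kᶜ f) z :=
    hl.mono fun z hz => (not_not.1 hz : AnalyticAt ℂ _ z).differentiableAt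
  obtain ⟨g, hg, hgl⟩ :=
    exists_analyticAt_eventuallyEq_of_tendsto_sub_smul hd (hisolated l (hSK hlS) hd)
  have hK_sub : Kᶜ ⊆ {l}ᶜ := Set.compl_subset_compl.2 (Set.singleton_subset_iff.2 (hSK hlS))
  refine hlS (hanalytic hg ?_)
  filter_upwards [nhdsWithin_mono l hK_sub hgl, self_mem_nhdsWithin] with z hz hzK
  rw [← extendFrom_compl_eq hcount hf z hzK, hz]

theorem eq_zero_of_countable_singularities {f : ℂ → E} {K : Set ℂ} {M : ℝ} (hK : IsClosed K)
    (hcount : K.Countable) (hK1 : ∀ z ∈ K, ‖z‖ = 1) (hf : ∀ z ∉ K, DifferentiableAt ℂ f z)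
    (hM : ∀ z, ‖f z‖ * |‖z‖ - 1| ≤ M)
    (hrad : ∀ l ∈ K, Tendsto (fun r : ℝ => ((r : ℂ) - 1) • f (r * l)) (𝓝[>] 1) (𝓝 0)) :
    ∀ z ∉ K, f z = 0 := by
  have hext := extendFrom_compl_eq hcount hf
  have hextM : ∀ z, ‖extendFrom Kᶜ f z‖ * |‖z‖ - 1| ≤ M := by
    intro z
    by_cases hz : z ∈ K
    · simpa [hK1 z hz] using hM z
    · rw [hext z hz]
      exact hM z
  have hdiff : Differentiable ℂ (extendFrom Kᶜ f) := by
    refine differentiable_extendFrom_compl_of_countable hK hcount hf fun l hl hd =>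
      tendsto_sub_smul_zero_of_radial (hK1 l hl) hd hextM ((hrad l hl).congr' ?_)
    filter_upwards [self_mem_nhdsWithin] with r hr
    have hrK : (r : ℂ) * l ∉ K := fun h => (Set.mem_Ioi.1 hr).ne' <| by
      rw [← hK1 _ h, norm_ofReal_mul_of_norm_eq_one (zero_le_one.trans hr.le) (hK1 l hl)]
    rw [hext _ hrK]
  intro z hz
  rw [← hext z hz]
  exact hdiff.apply_eq_of_tendsto_cocompact z (tendsto_cocompact_zero_of_norm_mul_abs_le hextM)

end Singularities

section Resolvent

theorem resolvent_mul_self {R A : Type*} [CommSemiring R] [Ring A] [Algebra R A] {a : A} {z : R}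
    (hz : z ∉ spectrum R a) : resolvent a z * a = z • resolvent a z - 1 := by
  have hinv : resolvent a z * (algebraMap R A z - a) = 1 :=
    Ring.inverse_mul_cancel _ (spectrum.notMem_iff.1 hz)
  rw [mul_sub, ← Algebra.commutes, ← Algebra.smul_def] at hinv
  rw [← hinv, sub_sub_cancel]

theorem self_mul_resolvent {R A : Type*} [CommSemiring R] [Ring A] [Algebra R A] {a : A} {z : R}
    (hz : z ∉ spectrum R a) : a * resolvent a z = z • resolvent a z - 1 := by
  have hinv : (algebraMap R A z - a) * resolvent a z = 1 :=
    Ring.mul_inverse_cancel _ (spectrum.notMem_iff.1 hz)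
  rw [sub_mul, ← Algebra.smul_def] at hinv
  rw [← hinv, sub_sub_cancel]

variable {𝕜 A : Type*} [NormedField 𝕜] [NormedRing A] [NormedAlgebra 𝕜 A] {a : A}
  {C : ℝ} {z : 𝕜}

theorem norm_inv_smul_pow_le (ha : ∀ n, ‖a ^ n‖ ≤ C) (n : ℕ) :
    ‖(z⁻¹ • a) ^ n‖ ≤ C * ‖z‖⁻¹ ^ n := by
  rw [smul_pow, norm_smul, norm_pow, norm_inv, mul_comm]
  gcongr
  exact ha n

theorem algebraMap_sub_eq_smul_one_sub (a : A) (hz : z ≠ 0) :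
    algebraMap 𝕜 A z - a = z • (1 - z⁻¹ • a) := by
  rw [smul_sub, smul_inv_smul₀ hz, Algebra.algebraMap_eq_smul_one]

theorem algebraMap_sub_mul_inv_smul_tsum (hz : z ≠ 0) (ha : Summable fun n => (z⁻¹ • a) ^ n) :
    (algebraMap 𝕜 A z - a) * (z⁻¹ • ∑' n, (z⁻¹ • a) ^ n) = 1 := by
  rw [algebraMap_sub_eq_smul_one_sub a hz, smul_mul_smul_comm, mul_inv_cancel₀ hz, one_smul,
    ha.one_sub_mul_tsum_pow]

theorem inv_smul_tsum_mul_algebraMap_sub (hz : z ≠ 0) (ha : Summable fun n => (z⁻¹ • a) ^ n) :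
    (z⁻¹ • ∑' n, (z⁻¹ • a) ^ n) * (algebraMap 𝕜 A z - a) = 1 := by
  rw [algebraMap_sub_eq_smul_one_sub a hz, smul_mul_smul_comm, inv_mul_cancel₀ hz, one_smul,
    ha.tsum_pow_mul_one_sub]

variable [CompleteSpace A]

theorem summable_inv_smul_pow (ha : ∀ n, ‖a ^ n‖ ≤ C) (hz : 1 < ‖z‖) :
    Summable fun n => (z⁻¹ • a) ^ n :=
  .of_norm_bounded ((summable_geometric_of_lt_one (by positivity)
    (inv_lt_one_of_one_lt₀ hz)).mul_left C) (norm_inv_smul_pow_le ha)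

theorem notMem_spectrum_of_norm_pow_le (ha : ∀ n, ‖a ^ n‖ ≤ C) (hz : 1 < ‖z‖) :
    z ∉ spectrum 𝕜 a := by
  have hz0 : z ≠ 0 := norm_pos_iff.1 (one_pos.trans hz)
  have hsum := summable_inv_smul_pow ha hz
  exact not_not.2 (spectrum.mem_resolventSet_of_left_right_inverse
    (algebraMap_sub_mul_inv_smul_tsum hz0 hsum) (inv_smul_tsum_mul_algebraMap_sub hz0 hsum))

theorem resolvent_eq_inv_smul_tsum (ha : ∀ n, ‖a ^ n‖ ≤ C) (hz : 1 < ‖z‖) :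
    resolvent a z = z⁻¹ • ∑' n, (z⁻¹ • a) ^ n :=
  left_inv_eq_right_inv
    (Ring.inverse_mul_cancel _ (spectrum.notMem_iff.1 (notMem_spectrum_of_norm_pow_le ha hz)))
    (algebraMap_sub_mul_inv_smul_tsum (norm_pos_iff.1 (one_pos.trans hz))
      (summable_inv_smul_pow ha hz))

theorem norm_resolvent_mul_norm_sub_one_le (ha : ∀ n, ‖a ^ n‖ ≤ C) (hz : 1 < ‖z‖) :
    ‖resolvent a z‖ * (‖z‖ - 1) ≤ C := by
  have hz_sub : 0 < ‖z‖ - 1 := sub_pos.2 hz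
  have hz_pos : 0 < ‖z‖ := one_pos.trans hz
  have hz_inv : 1 - ‖z‖⁻¹ = ‖z‖⁻¹ * (‖z‖ - 1) := by
    rw [mul_sub, inv_mul_cancel₀ hz_pos.ne', mul_one]
  have htsum : ‖∑' n, (z⁻¹ • a) ^ n‖ ≤ C * (1 - ‖z‖⁻¹)⁻¹ :=
    tsum_of_norm_bounded ((hasSum_geometric_of_lt_one (by positivity)
      (inv_lt_one_of_one_lt₀ hz)).mul_left C) (norm_inv_smul_pow_le ha)
  calc ‖resolvent a z‖ * (‖z‖ - 1)
      = ‖z‖⁻¹ * ‖∑' n, (z⁻¹ • a) ^ n‖ * (‖z‖ - 1) := by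
        rw [resolvent_eq_inv_smul_tsum ha hz, norm_smul, norm_inv]
    _ ≤ ‖z‖⁻¹ * (C * (1 - ‖z‖⁻¹)⁻¹) * (‖z‖ - 1) := by gcongr
    _ = C := by
        rw [hz_inv]
        field_simp

end Resolvent

section Functionals

theorem exists_tendsto_apply_of_eventually_norm_le {𝕜 X ι : Type*} [NontriviallyNormedField 𝕜]
    [ProperSpace 𝕜] [SeminormedAddCommGroup X] [NormedSpace 𝕜 X] {U : Ultrafilter ι}
    {φ : ι → StrongDual 𝕜 X} {C : ℝ} (hφ : ∀ᶠ i in (U : Filter ι), ‖φ i‖ ≤ C) :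
    ∃ ψ : StrongDual 𝕜 X, ‖ψ‖ ≤ C ∧ ∀ y, Tendsto (fun i => φ i y) U (𝓝 (ψ y)) := by
  obtain ⟨ψ, hψ, hU⟩ := (WeakDual.isCompact_closedBall (𝕜 := 𝕜) (E := X) 0 C).ultrafilter_le_nhds'
    (U.map fun i => StrongDual.toWeakDual (φ i)) (hφ.mono fun i hi => by simpa using hi)
  exact ⟨WeakDual.toStrongDual ψ, by simpa using hψ,
    fun y => ((WeakDual.eval_continuous y).tendsto ψ).comp hU⟩

/-- Backward orbits of the dual operator `φ ↦ φ ∘L T`: it sends `χ (j + 1)` to `χ j`. They extend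
the forward orbit `χ 0 ∘L T ^ n` to a two-sided sequence. -/
def IsBackwardOrbit {𝕜 X : Type*} [NontriviallyNormedField 𝕜] [SeminormedAddCommGroup X]
    [NormedSpace 𝕜 X] (T : X →L[𝕜] X) (χ : ℕ → StrongDual 𝕜 X) : Prop :=
  ∀ j, χ (j + 1) ∘L T = χ j

theorem norm_apply_pow_apply_of_comp_eq_smul {𝕜 X : Type*} [NontriviallyNormedField 𝕜]
    [SeminormedAddCommGroup X] [NormedSpace 𝕜 X] {T : X →L[𝕜] X} {c : StrongDual 𝕜 X} {l : 𝕜}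
    (hl : ‖l‖ = 1) (hc : c ∘L T = l • c) (x : X) (n : ℕ) : ‖c ((T ^ n) x)‖ = ‖c x‖ := by
  induction n with
  | zero => simp
  | succ n ih =>
    have hstep : c (T ((T ^ n) x)) = l * c ((T ^ n) x) := congrArg (· ((T ^ n) x)) hc
    rw [pow_succ', mul_apply_eq_comp, hstep, norm_mul, hl, one_mul, ih]

theorem exists_isBackwardOrbit_of_not_tendsto {𝕜 X : Type*} [RCLike 𝕜] [SeminormedAddCommGroup X]
    [NormedSpace 𝕜 X] {T : X →L[𝕜] X} {C : ℝ} (hT : ∀ n, ‖T ^ n‖ ≤ C) {x : X}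
    (hx : ¬ Tendsto (fun n => ‖(T ^ n) x‖) atTop (𝓝 0)) :
    ∃ χ, IsBackwardOrbit T χ ∧ (∀ j, ‖χ j‖ ≤ C) ∧ χ 0 x ≠ 0 := by
  rw [tendsto_iff_ultrafilter] at hx
  push Not at hx
  obtain ⟨U, hU, hUx⟩ := hx
  choose g hg_norm hg_apply using fun m => exists_dual_vector'' 𝕜 ((T ^ m) x)
  have hbound : ∀ j m, ‖g m ∘L T ^ (m - j)‖ ≤ C := fun j m =>
    calc ‖g m ∘L T ^ (m - j)‖ ≤ ‖g m‖ * ‖T ^ (m - j)‖ := (g m).opNorm_comp_le _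
      _ ≤ 1 * C := by gcongr; exacts [hg_norm m, hT _]
      _ = C := one_mul C
  choose χ hχ_norm hχ using fun j =>
    exists_tendsto_apply_of_eventually_norm_le (U := U) (.of_forall (hbound j))
  refine ⟨χ, fun j => ?_, hχ_norm, fun hχx => hUx ?_⟩
  · ext y
    refine tendsto_nhds_unique (hχ (j + 1) (T y)) ((hχ j y).congr' ?_)
    filter_upwards [hU (eventually_ge_atTop (j + 1))] with m hm
    rw [show m - j = m - (j + 1) + 1 by lia, pow_succ]
    rfl
  · have hlim := (hχ 0 x).norm
    rw [hχx, norm_zero] at hlim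
    refine hlim.congr fun m => ?_
    change ‖g m ((T ^ m) x)‖ = ‖(T ^ m) x‖
    rw [hg_apply, RCLike.norm_ofReal, abs_norm]

end Functionals

section CarlemanTransform

variable {X : Type*} [NormedAddCommGroup X] [NormedSpace ℂ X] {T : X →L[ℂ] X}
  {χ : ℕ → StrongDual ℂ X} {C : ℝ} {x : X} {z : ℂ}

open Classical in
/-- The Carleman transform at `x` of the two-sided sequence of functionals consisting of a backward
orbit `χ` of `T` and of the forward orbit `χ 0 ∘ T ^ n`, `n ≥ 1`. Outside the unit disc it is
`∑ n ≥ 1, χ 0 (T ^ n x) / z ^ n`, encoded by the resolvent so as to make sense on the unit circle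
away from the spectrum. -/
noncomputable def carlemanTransform (T : X →L[ℂ] X) (χ : ℕ → StrongDual ℂ X) (x : X) (z : ℂ) : ℂ :=
  if ‖z‖ < 1 then -∑' j, χ j x * z ^ j else χ 0 (T (resolvent T z x))

theorem carlemanTransform_of_norm_lt_one (hz : ‖z‖ < 1) :
    carlemanTransform T χ x z = -∑' j, χ j x * z ^ j :=
  if_pos hz

theorem carlemanTransform_zero : carlemanTransform T χ x 0 = -χ 0 x := by
  rw [carlemanTransform_of_norm_lt_one (by simp), tsum_eq_single 0 (fun j hj => by simp [hj])]
  simp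

theorem norm_apply_mul_pow_le (hχ : ∀ j, ‖χ j‖ ≤ C) (u : X) (z : ℂ) (j : ℕ) :
    ‖χ j u * z ^ j‖ ≤ C * ‖u‖ * ‖z‖ ^ j := by
  rw [norm_mul, norm_pow]
  gcongr
  exact (χ j).le_of_opNorm_le (hχ j) u

theorem summable_apply_mul_pow (hχ : ∀ j, ‖χ j‖ ≤ C) (u : X) (hz : ‖z‖ < 1) :
    Summable fun j => χ j u * z ^ j :=
  .of_norm_bounded ((summable_geometric_of_lt_one (norm_nonneg z) hz).mul_left _)
    (norm_apply_mul_pow_le hχ u z)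

theorem carlemanTransform_of_notMem_spectrum (hT : IsBackwardOrbit T χ) (hχ : ∀ j, ‖χ j‖ ≤ C)
    (x : X) (hz : z ∉ spectrum ℂ T) :
    carlemanTransform T χ x z = χ 0 (T (resolvent T z x)) := by
  by_cases hz1 : ‖z‖ < 1
  · let u := resolvent T z x
    have hx : x = z • u - T u := by
      rw [eq_sub_iff_add_eq', ← eq_sub_iff_add_eq]
      exact congrArg (· x) (self_mul_resolvent hz)
    have hsum := summable_apply_mul_pow hχ (T u) hz1
    have htelescope : ∀ j, χ j x * z ^ j = χ (j + 1) (T u) * z ^ (j + 1) - χ j (T u) * z ^ j := by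
      intro j
      have hχu : χ (j + 1) (T u) = χ j u := congrArg (· u) (hT j)
      rw [hx, map_sub, map_smul, hχu, smul_eq_mul]
      ring
    rw [carlemanTransform_of_norm_lt_one hz1, tsum_congr htelescope,
      ((summable_nat_add_iff 1).2 hsum).tsum_sub hsum, hsum.tsum_eq_zero_add]
    simp [u]
  · exact if_neg hz1

theorem differentiableAt_carlemanTransform_of_norm_lt_one (hχ : ∀ j, ‖χ j‖ ≤ C) (x : X)
    (hz : ‖z‖ < 1) : DifferentiableAt ℂ (carlemanTransform T χ x) z := by
  obtain ⟨ρ, hzρ, hρ⟩ := exists_between hz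
  have hball : Metric.ball (0 : ℂ) ρ ∈ 𝓝 z := Metric.isOpen_ball.mem_nhds (by simpa using hzρ)
  have hseries : DifferentiableOn ℂ (fun w => ∑' j, χ j x * w ^ j) (Metric.ball 0 ρ) := by
    refine Complex.differentiableOn_tsum_of_summable_norm
      ((summable_geometric_of_lt_one ((norm_nonneg z).trans hzρ.le) hρ).mul_left (C * ‖x‖))
      (fun j => by fun_prop) Metric.isOpen_ball fun j w hw => ?_
    have hC : 0 ≤ C := (norm_nonneg _).trans (hχ 0)
    have hw_norm : ‖w‖ ≤ ρ := (mem_ball_zero_iff.1 hw).le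
    exact (norm_apply_mul_pow_le hχ x w j).trans (by gcongr)
  refine (hseries.differentiableAt hball).neg.congr_of_eventuallyEq ?_
  filter_upwards [hball] with w hw
  exact carlemanTransform_of_norm_lt_one ((mem_ball_zero_iff.1 hw).trans hρ)

theorem norm_carlemanTransform_mul_le_of_norm_lt_one (hχ : ∀ j, ‖χ j‖ ≤ C) (x : X)
    (hz : ‖z‖ < 1) : ‖carlemanTransform T χ x z‖ * (1 - ‖z‖) ≤ C * ‖x‖ := by
  have htsum := tsum_of_norm_bounded ((hasSum_geometric_of_lt_one (norm_nonneg z) hz).mul_left _)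
    (norm_apply_mul_pow_le hχ x z)
  rwa [carlemanTransform_of_norm_lt_one hz, norm_neg, ← le_div_iff₀ (sub_pos.2 hz), div_eq_mul_inv]

variable [CompleteSpace X]

theorem differentiableAt_carlemanTransform_of_notMem_spectrum (hT : IsBackwardOrbit T χ)
    (hχ : ∀ j, ‖χ j‖ ≤ C) (x : X) (hz : z ∉ spectrum ℂ T) :
    DifferentiableAt ℂ (carlemanTransform T χ x) z := by
  have hres : DifferentiableAt ℂ (fun w => χ 0 (T (resolvent T w x))) z :=
    (χ 0 ∘L T).differentiableAt.comp z
      ((spectrum.hasDerivAt_resolvent_const_left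
        (spectrum.notMem_iff.1 hz)).differentiableAt.clm_apply (differentiableAt_const x))
  refine hres.congr_of_eventuallyEq ?_
  filter_upwards [(spectrum.isClosed T).isOpen_compl.mem_nhds hz] with w hw
  exact carlemanTransform_of_notMem_spectrum hT hχ x hw

theorem norm_carlemanTransform_mul_le_of_one_lt_norm (hT : ∀ n, ‖T ^ n‖ ≤ C)
    (χ : ℕ → StrongDual ℂ X) (x : X) (hz : 1 < ‖z‖) :
    ‖carlemanTransform T χ x z‖ * (‖z‖ - 1) ≤ ‖χ 0 ∘L T‖ * C * ‖x‖ := by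
  have : 0 < ‖z‖ - 1 := sub_pos.2 hz
  calc ‖carlemanTransform T χ x z‖ * (‖z‖ - 1)
      = ‖(χ 0 ∘L T) (resolvent T z x)‖ * (‖z‖ - 1) := by
        rw [carlemanTransform, if_neg hz.not_gt]; rfl
    _ ≤ ‖χ 0 ∘L T‖ * (‖resolvent T z‖ * ‖x‖) * (‖z‖ - 1) := by
        gcongr
        exact (χ 0 ∘L T).le_opNorm_of_le ((resolvent T z).le_opNorm x)
    _ = ‖χ 0 ∘L T‖ * (‖resolvent T z‖ * (‖z‖ - 1)) * ‖x‖ := by ring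
    _ ≤ ‖χ 0 ∘L T‖ * C * ‖x‖ := by gcongr; exact norm_resolvent_mul_norm_sub_one_le hT hz

theorem exists_norm_carlemanTransform_mul_abs_le (hT : ∀ n, ‖T ^ n‖ ≤ C) {B : ℝ}
    (hχ : ∀ j, ‖χ j‖ ≤ B) (x : X) :
    ∃ M, ∀ z, ‖carlemanTransform T χ x z‖ * |‖z‖ - 1| ≤ M := by
  refine ⟨max (B * ‖x‖) (‖χ 0 ∘L T‖ * C * ‖x‖), fun z => ?_⟩
  have hB : 0 ≤ B := (norm_nonneg _).trans (hχ 0)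
  rcases lt_trichotomy ‖z‖ 1 with hz | hz | hz
  · rw [abs_sub_comm, abs_of_pos (sub_pos.2 hz)]
    exact le_max_of_le_left (norm_carlemanTransform_mul_le_of_norm_lt_one hχ x hz)
  · rw [hz, sub_self, abs_zero, mul_zero]
    exact le_max_of_le_left (by positivity)
  · rw [abs_of_pos (sub_pos.2 hz)]
    exact le_max_of_le_right (norm_carlemanTransform_mul_le_of_one_lt_norm hT χ x hz)

end CarlemanTransform

section Stability

variable {X : Type*} [NormedAddCommGroup X] [NormedSpace ℂ X] [CompleteSpace X] {T : X →L[ℂ] X}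
  {C : ℝ} {x : X}

theorem comp_eq_smul_of_tendsto_resolvent (hT : ∀ n, ‖T ^ n‖ ≤ C) {l : ℂ} (hl : ‖l‖ = 1)
    {ψ c : StrongDual ℂ X} {F : Filter ℝ} [F.NeBot] (hF : F ≤ 𝓝[>] 1)
    (hc : ∀ y, Tendsto (fun r : ℝ => ((r : ℂ) - 1) * ψ (resolvent T (r * l) y)) F (𝓝 (c y))) :
    c ∘L T = l • c := by
  ext y
  have hr : Tendsto (fun r : ℝ => (r : ℂ)) F (𝓝 1) :=
    (Complex.continuous_ofReal.tendsto' 1 1 Complex.ofReal_one).mono_left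
      (hF.trans nhdsWithin_le_nhds)
  have hlim := ((hr.mul_const l).mul (hc y)).sub ((hr.sub_const 1).mul_const (ψ y))
  simp only [one_mul, sub_self, zero_mul, sub_zero] at hlim
  refine tendsto_nhds_unique (hc (T y)) (hlim.congr' ?_)
  filter_upwards [hF self_mem_nhdsWithin] with r hr
  have hmem : (r : ℂ) * l ∉ spectrum ℂ T := notMem_spectrum_of_norm_pow_le hT <| by
    rwa [norm_ofReal_mul_of_norm_eq_one (zero_le_one.trans hr.le) hl]
  have hres : resolvent T (r * l) (T y) = ((r : ℂ) * l) • resolvent T (r * l) y - y :=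
    congrArg (· y) (resolvent_mul_self hmem)
  rw [hres, map_sub, map_smul, smul_eq_mul]
  ring

theorem tendsto_sub_one_mul_apply_resolvent_zero (hT : ∀ n, ‖T ^ n‖ ≤ C) {l : ℂ} (hl : ‖l‖ = 1)
    (hx : ∀ c : StrongDual ℂ X, c ∘L T = l • c → c x = 0) (ψ : StrongDual ℂ X) :
    Tendsto (fun r : ℝ => ((r : ℂ) - 1) * ψ (resolvent T (r * l) x)) (𝓝[>] 1) (𝓝 0) := by
  refine (tendsto_iff_ultrafilter _ _ _).2 fun U hU => ?_
  have hbound : ∀ᶠ r : ℝ in U, ‖((r : ℂ) - 1) • ψ ∘L resolvent T (r * l)‖ ≤ ‖ψ‖ * C := by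
    filter_upwards [hU self_mem_nhdsWithin] with r hr
    have hr_norm := norm_ofReal_mul_of_norm_eq_one (zero_le_one.trans hr.le) hl
    have hr_sub : ‖(r : ℂ) - 1‖ = r - 1 := by
      rw [← Complex.ofReal_one, ← Complex.ofReal_sub, Complex.norm_of_nonneg (sub_pos.2 hr).le]
    have hres := norm_resolvent_mul_norm_sub_one_le hT (by rwa [hr_norm] : 1 < ‖(r : ℂ) * l‖)
    rw [hr_norm] at hres
    calc ‖((r : ℂ) - 1) • ψ ∘L resolvent T (r * l)‖
        ≤ (r - 1) * (‖ψ‖ * ‖resolvent T (r * l)‖) := by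
          rw [norm_smul, hr_sub]
          exact mul_le_mul_of_nonneg_left (ψ.opNorm_comp_le _) (sub_pos.2 hr).le
      _ = ‖ψ‖ * (‖resolvent T (r * l)‖ * (r - 1)) := by ring
      _ ≤ ‖ψ‖ * C := by gcongr
  obtain ⟨c, -, hc⟩ := exists_tendsto_apply_of_eventually_norm_le hbound
  rw [← hx c (comp_eq_smul_of_tendsto_resolvent hT hl hU hc)]
  exact hc x

theorem tendsto_norm_pow_apply_zero_of_forall_comp_eq_smul (hT : ∀ n, ‖T ^ n‖ ≤ C)
    (hσ : (spectrum ℂ T ∩ {lam : ℂ | ‖lam‖ = 1}).Countable)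
    (hx : ∀ (l : ℂ) (c : StrongDual ℂ X), ‖l‖ = 1 → c ∘L T = l • c → c x = 0) :
    Tendsto (fun n => ‖(T ^ n) x‖) atTop (𝓝 0) := by
  by_contra hnot
  obtain ⟨χ, hχT, hχ, hχx⟩ := exists_isBackwardOrbit_of_not_tendsto hT hnot
  obtain ⟨M, hM⟩ := exists_norm_carlemanTransform_mul_abs_le hT hχ x
  have hclosed : IsClosed (spectrum ℂ T ∩ {lam : ℂ | ‖lam‖ = 1}) :=
    (spectrum.isClosed T).inter (isClosed_eq continuous_norm continuous_const)
  have hdiff : ∀ z ∉ spectrum ℂ T ∩ {lam : ℂ | ‖lam‖ = 1},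
      DifferentiableAt ℂ (carlemanTransform T χ x) z := by
    intro z hz
    rcases lt_trichotomy ‖z‖ 1 with hz1 | hz1 | hz1
    · exact differentiableAt_carlemanTransform_of_norm_lt_one hχ x hz1
    · exact differentiableAt_carlemanTransform_of_notMem_spectrum hχT hχ x fun h => hz ⟨h, hz1⟩
    · exact differentiableAt_carlemanTransform_of_notMem_spectrum hχT hχ x
        (notMem_spectrum_of_norm_pow_le hT hz1)
  have hrad : ∀ l ∈ spectrum ℂ T ∩ {lam : ℂ | ‖lam‖ = 1},
      Tendsto (fun r : ℝ => ((r : ℂ) - 1) • carlemanTransform T χ x (r * l)) (𝓝[>] 1) (𝓝 0) := by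
    rintro l ⟨-, hl⟩
    refine (tendsto_sub_one_mul_apply_resolvent_zero hT hl (hx l · hl) (χ 0 ∘L T)).congr' ?_
    filter_upwards [self_mem_nhdsWithin] with r hr
    rw [carlemanTransform_of_notMem_spectrum hχT hχ x (notMem_spectrum_of_norm_pow_le hT ?_)]
    · rfl
    · rwa [norm_ofReal_mul_of_norm_eq_one (zero_le_one.trans hr.le) hl]
  have hzero := eq_zero_of_countable_singularities hclosed hσ (fun z hz => hz.2) hdiff hM hrad 0
    (by simp)
  exact hχx (by simpa [carlemanTransform_zero] using hzero)

end Stability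

theorem tendsto_sum_Icc_div {u : ℕ → ℝ} {l : ℝ} (hu : Tendsto u atTop (𝓝 l)) :
    Tendsto (fun n : ℕ => (∑ k ∈ Icc 1 n, u k) / n) atTop (𝓝 l) := by
  refine ((tendsto_add_atTop_iff_nat 1).2 hu).cesaro.congr fun n => ?_
  rw [div_eq_inv_mul, range_eq_Ico, sum_Ico_add' u 0 n 1]
  rfl

/-- Let `T` be power-bounded on a complex Banach space `X` with
`σ(T) ∩ 𝕋` countable. Then for every `x ∈ X` the following are equivalent:
(i) some subsequence of `(Tⁿ x)` converges weakly to `0`;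
(ii) `(1/n) ∑_{k=1}^n |⟨x*, Tᵏ x⟩| → 0` for every `x* ∈ X*`;
(iii) `‖Tⁿ x‖ → 0`. -/
theorem stability_of_countable_unimodular_spectrum {X : Type*} [NormedAddCommGroup X]
    [NormedSpace ℂ X] [CompleteSpace X] (T : X →L[ℂ] X)
    (hpb : ∃ C : ℝ, ∀ n : ℕ, ‖T ^ n‖ ≤ C)
    (hσ : (spectrum ℂ T ∩ {lam : ℂ | ‖lam‖ = 1}).Countable) (x : X) :
    ((∃ n : ℕ → ℕ, StrictMono n ∧ ∀ f : StrongDual ℂ X,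
        Tendsto (fun j : ℕ => f ((T ^ n j) x)) atTop (nhds 0)) ↔
      (∀ f : StrongDual ℂ X,
        Tendsto (fun n : ℕ => (∑ k ∈ Icc 1 n, ‖f ((T ^ k) x)‖) / n) atTop (nhds 0))) ∧
    ((∀ f : StrongDual ℂ X,
        Tendsto (fun n : ℕ => (∑ k ∈ Icc 1 n, ‖f ((T ^ k) x)‖) / n) atTop (nhds 0)) ↔
      Tendsto (fun n : ℕ => ‖(T ^ n) x‖) atTop (nhds 0)) := by
  obtain ⟨C, hC⟩ := hpb
  have hstable_of_weak : (∃ n : ℕ → ℕ, StrictMono n ∧ ∀ f : StrongDual ℂ X,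
      Tendsto (fun j : ℕ => f ((T ^ n j) x)) atTop (nhds 0)) →
      Tendsto (fun n : ℕ => ‖(T ^ n) x‖) atTop (nhds 0) := by
    rintro ⟨n, -, hn⟩
    refine tendsto_norm_pow_apply_zero_of_forall_comp_eq_smul hC hσ fun l c hl hc => ?_
    have hlim := (hn c).norm
    simp only [norm_apply_pow_apply_of_comp_eq_smul hl hc, norm_zero] at hlim
    exact norm_eq_zero.1 (tendsto_nhds_unique tendsto_const_nhds hlim)
  have hstable_of_cesaro : (∀ f : StrongDual ℂ X,
      Tendsto (fun n : ℕ => (∑ k ∈ Icc 1 n, ‖f ((T ^ k) x)‖) / n) atTop (nhds 0)) →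
      Tendsto (fun n : ℕ => ‖(T ^ n) x‖) atTop (nhds 0) := by
    intro h
    refine tendsto_norm_pow_apply_zero_of_forall_comp_eq_smul hC hσ fun l c hl hc => ?_
    refine norm_eq_zero.1 (tendsto_nhds_unique (tendsto_sum_Icc_div tendsto_const_nhds) ?_)
    simpa only [norm_apply_pow_apply_of_comp_eq_smul hl hc] using h c
  have hweak (h : Tendsto (fun n : ℕ => ‖(T ^ n) x‖) atTop (nhds 0)) (f : StrongDual ℂ X) :
      Tendsto (fun n : ℕ => f ((T ^ n) x)) atTop (nhds 0) :=
    (f.continuous.tendsto' 0 0 (map_zero f)).comp (tendsto_zero_iff_norm_tendsto_zero.2 h)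
  have hcesaro (h : Tendsto (fun n : ℕ => ‖(T ^ n) x‖) atTop (nhds 0)) (f : StrongDual ℂ X) :
      Tendsto (fun n : ℕ => (∑ k ∈ Icc 1 n, ‖f ((T ^ k) x)‖) / n) atTop (nhds 0) :=
    tendsto_sum_Icc_div (tendsto_zero_iff_norm_tendsto_zero.1 (hweak h f))
  exact ⟨⟨fun h => hcesaro (hstable_of_weak h),
    fun h => ⟨id, strictMono_id, hweak (hstable_of_cesaro h)⟩⟩, hstable_of_cesaro, hcesaro⟩
end

section
/- Let X be a Banach space over 𝕜, where 𝕜 is ℝ or ℂ, and let T be a power-bounded operator on X of the form T = α·I + S with α ∈ 𝕜 and S^k a compact operator for some k ≥ 1. Then for every x ∈ X the following are equivalent: (i) there exists a strictly increasing sequence of natural numbers (n_j) such that ⟨x*, T^{n_j} x⟩ → 0 for every x* ∈ X*; (ii) (1/n) ∑_{k=1}^n |⟨x*, T^k x⟩| → 0 as n → ∞, for every x* ∈ X*; (iii) ‖Tⁿ x‖ → 0 as n → ∞. -/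
open Filter Finset

/-!
Let `M` be the subspace of vectors `y` with `Tⁿ y → 0`; it is closed because `T` is power-bounded.
A relatively compact set has the same closure weakly and in norm. Suppose that `0` is in the weak
closure of the orbit of `x` and that `K = p(T)` is compact. Then the orbit of `K x` is relatively
compact, so it comes arbitrarily close to `0` in norm, and power-boundedness gives `K x ∈ M`.
Modulo `M`, the vector `x` is therefore annihilated by `p(T)`, so its orbit there is a bounded
subset of a finite-dimensional space. By the same comparison of closures, `Tⁿ x` comes arbitrarily
close to `M`, and this forces `x ∈ M`. The operators in question are those with `p = (X - α)ᵏ`.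
-/

open Topology Polynomial

section Cesaro

theorem exists_lt_of_tendsto_cesaro {a : ℕ → ℝ} {l ε : ℝ}
    (ha : Tendsto (fun n : ℕ => (∑ k ∈ Icc 1 n, a k) / n) atTop (𝓝 l)) (hε : l < ε) :
    ∃ k, a k < ε := by
  by_contra! hge
  refine hε.not_ge (ge_of_tendsto ha ?_)
  filter_upwards [eventually_gt_atTop 0] with n hn
  rw [le_div_iff₀ (by exact_mod_cast hn)]
  calc ε * n = ∑ _k ∈ Icc 1 n, ε := by simp [mul_comm]
    _ ≤ ∑ k ∈ Icc 1 n, a k := sum_le_sum fun k _ => hge k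

theorem tendsto_cesaro_Icc {a : ℕ → ℝ} {l : ℝ} (ha : Tendsto a atTop (𝓝 l)) :
    Tendsto (fun n : ℕ => (∑ k ∈ Icc 1 n, a k) / n) atTop (𝓝 l) := by
  refine (ha.comp (tendsto_add_atTop_nat 1)).cesaro.congr fun n => ?_
  rw [div_eq_inv_mul, ← Ico_add_one_right_eq_Icc, ← zero_add 1, ← sum_Ico_add', range_eq_Ico]
  rfl

end Cesaro

section WeakClosure

section NormedField

variable {𝕜 E : Type*} [NormedField 𝕜] [AddCommGroup E] [Module 𝕜 E] [TopologicalSpace E]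

theorem zero_mem_weakClosure_of_forall_exists_sum_norm_lt {s : Set E}
    (hs : ∀ F : Finset (StrongDual 𝕜 E), ∀ ε > 0, ∃ a ∈ s, ∑ f ∈ F, ‖f a‖ < ε) :
    toWeakSpace 𝕜 E 0 ∈ closure (toWeakSpace 𝕜 E '' s) := by
  refine (mem_closure_iff_nhds_basis (topDualPairing 𝕜 E).flip.hasBasis_weakBilin).2 ?_
  intro U hU
  obtain ⟨F, ε, hε, rfl⟩ := (SeminormFamily.basisSets_iff _).1 hU
  obtain ⟨a, ha, hlt⟩ := hs F ε hε
  refine ⟨toWeakSpace 𝕜 E a, Set.mem_image_of_mem _ ha, (Seminorm.mem_ball_zero _).2 ?_⟩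
  refine Seminorm.finset_sup_apply_lt hε fun f hf => lt_of_le_of_lt ?_ hlt
  exact single_le_sum (f := fun f : StrongDual 𝕜 E => ‖f a‖) (fun _ _ => norm_nonneg _) hf

theorem zero_mem_weakClosure_range_of_tendsto_cesaro {u : ℕ → E}
    (hu : ∀ f : StrongDual 𝕜 E,
      Tendsto (fun n : ℕ => (∑ k ∈ Icc 1 n, ‖f (u k)‖) / n) atTop (𝓝 0)) :
    toWeakSpace 𝕜 E 0 ∈ closure (toWeakSpace 𝕜 E '' Set.range u) := by
  refine zero_mem_weakClosure_of_forall_exists_sum_norm_lt fun F ε hε => ?_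
  have hsum : Tendsto (fun n : ℕ => (∑ k ∈ Icc 1 n, ∑ f ∈ F, ‖f (u k)‖) / n) atTop (𝓝 0) := by
    simpa only [sum_comm (s := F), ← sum_div, sum_const_zero] using
      tendsto_finsetSum F fun f _ => hu f
  obtain ⟨k, hk⟩ := exists_lt_of_tendsto_cesaro hsum hε
  exact ⟨u k, Set.mem_range_self k, hk⟩

theorem zero_mem_weakClosure_range_of_tendsto_subseq {u : ℕ → E} {n : ℕ → ℕ}
    (hu : ∀ f : StrongDual 𝕜 E, Tendsto (fun j => f (u (n j))) atTop (𝓝 0)) :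
    toWeakSpace 𝕜 E 0 ∈ closure (toWeakSpace 𝕜 E '' Set.range u) := by
  refine zero_mem_weakClosure_of_forall_exists_sum_norm_lt fun F ε hε => ?_
  have hsum : Tendsto (fun j => ∑ f ∈ F, ‖f (u (n j))‖) atTop (𝓝 0) := by
    simpa only [norm_zero, sum_const_zero] using tendsto_finsetSum F fun f _ => (hu f).norm
  obtain ⟨j, hj⟩ := (hsum.eventually_lt_const hε).exists
  exact ⟨u (n j), Set.mem_range_self _, hj⟩

end NormedField

theorem map_mem_closure_image_of_mem_weakClosure {𝕜 E F : Type*} [CommRing 𝕜]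
    [TopologicalSpace 𝕜] [T2Space 𝕜] [ContinuousAdd 𝕜] [ContinuousConstSMul 𝕜 𝕜]
    [AddCommGroup E] [Module 𝕜 E] [TopologicalSpace E]
    [AddCommGroup F] [Module 𝕜 F] [TopologicalSpace F] [SeparatingDual 𝕜 F]
    (L : E →L[𝕜] F) {s : Set E} {a : E} (hs : IsCompact (closure (L '' s)))
    (ha : toWeakSpace 𝕜 E a ∈ closure (toWeakSpace 𝕜 E '' s)) :
    L a ∈ closure (L '' s) := by
  have hLa : toWeakSpace 𝕜 F (L a) ∈ closure (toWeakSpace 𝕜 F '' (L '' s)) := by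
    refine map_mem_closure (f := WeakSpace.map L) (WeakSpace.map L).continuous ha ?_
    rintro _ ⟨b, hb, rfl⟩
    exact Set.mem_image_of_mem _ (Set.mem_image_of_mem L hb)
  have hcl : toWeakSpace 𝕜 F '' closure (L '' s) = closure (toWeakSpace 𝕜 F '' (L '' s)) :=
    image_closure_of_isCompact hs (toWeakSpaceCLM 𝕜 F).continuous.continuousOn
  exact (toWeakSpace 𝕜 F).injective.mem_set_image.1 (hcl ▸ hLa)

end WeakClosure

section FiniteDimensional

theorem finiteDimensional_range_of_mul_left_eq_zero {k V : Type*} [Field k] [AddCommGroup V]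
    [Module k V] (φ : k[X] →ₗ[k] V) {p : k[X]} (hp : p ≠ 0) (hφ : ∀ q, φ (p * q) = 0) :
    FiniteDimensional k φ.range := by
  have : FiniteDimensional k (degreeLT k p.natDegree) :=
    Module.Finite.equiv (degreeLTEquiv k p.natDegree).symm
  suffices φ.range ≤ (degreeLT k p.natDegree).map φ from
    Submodule.finiteDimensional_of_le this
  rintro _ ⟨r, rfl⟩
  have hmod : φ (r % p) = φ r := by
    conv_rhs => rw [← EuclideanDomain.div_add_mod r p, map_add, hφ, zero_add]
  refine ⟨r % p, mem_degreeLT.2 ?_, hmod⟩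
  exact (degree_mod_lt r hp).trans_eq (degree_eq_natDegree hp)

theorem isCompact_closure_of_subset_finiteDimensional {𝕜 E : Type*} [NontriviallyNormedField 𝕜]
    [CompleteSpace 𝕜] [LocallyCompactSpace 𝕜] [NormedAddCommGroup E] [NormedSpace 𝕜 E]
    (V : Submodule 𝕜 E) [FiniteDimensional 𝕜 V] {s : Set E} (hsV : s ⊆ V)
    (hs : Bornology.IsBounded s) : IsCompact (closure s) := by
  have : ProperSpace V := FiniteDimensional.proper 𝕜 V
  have hpre : Bornology.IsBounded ((↑) ⁻¹' s : Set V) :=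
    V.subtypeₗᵢ.antilipschitz.isBounded_preimage hs
  refine (hpre.isCompact_closure.image continuous_subtype_val).closure_of_subset ?_
  intro y hy
  exact ⟨⟨y, hsV hy⟩, subset_closure hy, rfl⟩

end FiniteDimensional

section StableSubspace

variable {𝕜 E : Type*} [Semiring 𝕜] [AddCommMonoid E] [Module 𝕜 E] [TopologicalSpace E]
  [ContinuousAdd E] [ContinuousConstSMul 𝕜 E]

/-- The subspace of vectors `x` with `Tⁿ x → 0` (strongly), modulo which orbits are studied. -/
def stableSubspace (T : E →L[𝕜] E) : Submodule 𝕜 E where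
  carrier := {x | Tendsto (fun n : ℕ => (T ^ n) x) atTop (𝓝 0)}
  zero_mem' := by simpa only [Set.mem_ofPred_eq, map_zero] using tendsto_const_nhds
  add_mem' ha hb := by simpa only [Set.mem_ofPred_eq, map_add, add_zero] using ha.add hb
  smul_mem' c _ ha := by simpa only [Set.mem_ofPred_eq, map_smul, smul_zero] using ha.const_smul c

theorem mem_stableSubspace {T : E →L[𝕜] E} {x : E} :
    x ∈ stableSubspace T ↔ Tendsto (fun n : ℕ => (T ^ n) x) atTop (𝓝 0) :=
  Iff.rfl

theorem apply_mem_stableSubspace_of_commute {S T : E →L[𝕜] E} (hST : Commute S T)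
    {x : E} (hx : x ∈ stableSubspace T) :
    S x ∈ stableSubspace T := by
  have hS : Tendsto (fun n : ℕ => S ((T ^ n) x)) atTop (𝓝 0) :=
    (S.continuous.tendsto' 0 0 (map_zero S)).comp hx
  exact hS.congr fun n => DFunLike.congr_fun (hST.pow_right n).eq x

end StableSubspace

section PowerBounded

variable {𝕜 E : Type*} [NontriviallyNormedField 𝕜] [SeminormedAddCommGroup E] [NormedSpace 𝕜 E]

/-- Power-boundedness: the powers of `T` are uniformly bounded in operator norm. The bound is stated
as an existential rather than a supremum, which would be `0` for an unbounded family. -/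
def IsPowerBounded (T : E →L[𝕜] E) : Prop :=
  ∃ C : ℝ, ∀ n : ℕ, ‖T ^ n‖ ≤ C

variable {T : E →L[𝕜] E}

theorem isBounded_range_pow_apply (hT : IsPowerBounded T) (x : E) :
    Bornology.IsBounded (Set.range fun n : ℕ => (T ^ n) x) := by
  obtain ⟨C, hC⟩ := hT
  refine isBounded_iff_forall_norm_le.2 ⟨C * ‖x‖, ?_⟩
  rintro _ ⟨n, rfl⟩
  exact (T ^ n).le_of_opNorm_le (hC n) x

theorem isClosed_stableSubspace (hT : IsPowerBounded T) : IsClosed (stableSubspace T : Set E) := by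
  have hequi : Equicontinuous fun (n : ℕ) (x : E) => (T ^ n) x :=
    ((NormedSpace.equicontinuous_TFAE fun n : ℕ => T ^ n).out 5 1).1 hT
  exact hequi.isClosed_setOfPred_tendsto continuous_const

theorem mem_stableSubspace_of_zero_mem_closure_mkQL (hT : IsPowerBounded T) {x : E}
    (hx : 0 ∈ closure ((stableSubspace T).mkQL '' Set.range fun n : ℕ => (T ^ n) x)) :
    x ∈ stableSubspace T := by
  obtain ⟨C, hC⟩ := hT
  have hC₀ : 0 ≤ C := (norm_nonneg _).trans (hC 0)
  refine Metric.tendsto_atTop.2 fun ε hε => ?_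
  obtain ⟨_, ⟨_, ⟨n, rfl⟩, rfl⟩, hn⟩ :=
    Metric.mem_closure_iff.1 hx (ε / (2 * (C + 1))) (by positivity)
  rw [dist_zero_left] at hn
  obtain ⟨z, hz, hzε⟩ := QuotientAddGroup.norm_lt_iff.1 hn
  have hy : (T ^ n) x - z ∈ stableSubspace T :=
    (Submodule.Quotient.eq _).1 hz.symm
  obtain ⟨N, hN⟩ := Metric.tendsto_atTop.1 hy (ε / 2) (half_pos hε)
  refine ⟨N + n, fun m hm => ?_⟩
  obtain ⟨d, rfl⟩ := Nat.exists_eq_add_of_le' ((Nat.le_add_left n N).trans hm)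
  have hd := hN d (by omega)
  rw [dist_zero_right] at hd ⊢
  have hsmall : C * ‖z‖ ≤ ε / 2 := by
    rw [lt_div_iff₀ (by positivity)] at hzε
    nlinarith [norm_nonneg z]
  calc ‖(T ^ (d + n)) x‖ = ‖(T ^ d) ((T ^ n) x - z) + (T ^ d) z‖ := by
        rw [pow_add, mul_apply_eq_comp, map_sub, sub_add_cancel]
    _ ≤ ‖(T ^ d) ((T ^ n) x - z)‖ + ‖(T ^ d) z‖ := norm_add_le _ _
    _ ≤ ‖(T ^ d) ((T ^ n) x - z)‖ + C * ‖z‖ := by gcongr; exact (T ^ d).le_of_opNorm_le (hC d) z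
    _ < ε := by linarith

theorem mem_stableSubspace_of_zero_mem_closure (hT : IsPowerBounded T) {x : E}
    (hx : 0 ∈ closure (Set.range fun n : ℕ => (T ^ n) x)) : x ∈ stableSubspace T := by
  refine mem_stableSubspace_of_zero_mem_closure_mkQL hT ?_
  rw [← map_zero (stableSubspace T).mkQL]
  exact map_mem_closure (stableSubspace T).mkQL.continuous hx (Set.mapsTo_image _ _)

end PowerBounded

section PolynomiallyCompact

theorem commute_aeval_self {R A : Type*} [CommSemiring R] [Semiring A] [Algebra R A] (a : A)
    (p : R[X]) : Commute (aeval a p) a := by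
  simpa only [aeval_X] using (Commute.all p X).map (aeval a)

theorem apply_mem_stableSubspace_of_isCompactOperator {𝕜 E : Type*} [NontriviallyNormedField 𝕜]
    [NormedAddCommGroup E] [NormedSpace 𝕜 E] [SeparatingDual 𝕜 E] {K T : E →L[𝕜] E}
    (hK : IsCompactOperator K) (hKT : Commute K T) (hT : IsPowerBounded T) {x : E}
    (hx : toWeakSpace 𝕜 E 0 ∈ closure (toWeakSpace 𝕜 E '' Set.range fun n : ℕ => (T ^ n) x)) :
    K x ∈ stableSubspace T := by
  have hcomm : K '' (Set.range fun n : ℕ => (T ^ n) x) = Set.range fun n : ℕ => (T ^ n) (K x) := by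
    rw [← Set.range_comp]
    exact congrArg Set.range (funext fun n => DFunLike.congr_fun (hKT.pow_right n).eq x)
  have hcomp : IsCompact (closure (K '' Set.range fun n : ℕ => (T ^ n) x)) :=
    hK.isCompact_closure_image_of_bounded (f := (K : E →ₗ[𝕜] E)) (isBounded_range_pow_apply hT x)
  refine mem_stableSubspace_of_zero_mem_closure hT ?_
  simpa only [map_zero, hcomm] using map_mem_closure_image_of_mem_weakClosure K hcomp hx

variable {𝕜 E : Type*} [RCLike 𝕜] [NormedAddCommGroup E] [NormedSpace 𝕜 E] {T : E →L[𝕜] E}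

theorem mem_stableSubspace_of_aeval_apply_mem (hT : IsPowerBounded T) {p : 𝕜[X]} (hp : p ≠ 0)
    {x : E} (hpx : aeval T p x ∈ stableSubspace T)
    (hx : toWeakSpace 𝕜 E 0 ∈ closure (toWeakSpace 𝕜 E '' Set.range fun n : ℕ => (T ^ n) x)) :
    x ∈ stableSubspace T := by
  have := isClosed_stableSubspace hT
  let π := (stableSubspace T).mkQL
  let φ : 𝕜[X] →ₗ[𝕜] E ⧸ stableSubspace T :=
    π.toLinearMap ∘ₗ (ContinuousLinearMap.apply 𝕜 E x).toLinearMap ∘ₗ (aeval T).toLinearMap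
  have hφ (q : 𝕜[X]) : φ (p * q) = 0 := by
    have hq : aeval T q (aeval T p x) ∈ stableSubspace T :=
      apply_mem_stableSubspace_of_commute (commute_aeval_self T q) hpx
    simpa [φ, π, mul_comm p] using hq
  have : FiniteDimensional 𝕜 φ.range := finiteDimensional_range_of_mul_left_eq_zero φ hp hφ
  have hsub : (π '' Set.range fun n : ℕ => (T ^ n) x) ⊆ φ.range := by
    rintro _ ⟨_, ⟨n, rfl⟩, rfl⟩
    exact ⟨X ^ n, by simp [φ]⟩
  have hbdd : Bornology.IsBounded (π '' Set.range fun n : ℕ => (T ^ n) x) :=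
    π.lipschitz.isBounded_image (isBounded_range_pow_apply hT x)
  have hcomp := isCompact_closure_of_subset_finiteDimensional φ.range hsub hbdd
  refine mem_stableSubspace_of_zero_mem_closure_mkQL hT ?_
  simpa only [map_zero] using map_mem_closure_image_of_mem_weakClosure π hcomp hx

theorem mem_stableSubspace_of_isCompactOperator_aeval (hT : IsPowerBounded T) {p : 𝕜[X]}
    (hp : p ≠ 0) (hpT : IsCompactOperator (aeval T p)) {x : E}
    (hx : toWeakSpace 𝕜 E 0 ∈ closure (toWeakSpace 𝕜 E '' Set.range fun n : ℕ => (T ^ n) x)) :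
    x ∈ stableSubspace T :=
  mem_stableSubspace_of_aeval_apply_mem hT hp
    (apply_mem_stableSubspace_of_isCompactOperator hpT (commute_aeval_self T p) hT hx) hx

theorem real_stability_scalar_plus_compact_power_general (hT : IsPowerBounded T) {p : 𝕜[X]}
    (hp : p ≠ 0) (hpT : IsCompactOperator (aeval T p)) (x : E) :
    List.TFAE [
      toWeakSpace 𝕜 E 0 ∈ closure (toWeakSpace 𝕜 E '' Set.range fun n : ℕ => (T ^ n) x),
      ∃ n : ℕ → ℕ, StrictMono n ∧ ∀ f : StrongDual 𝕜 E,
        Tendsto (fun j : ℕ => f ((T ^ n j) x)) atTop (𝓝 0),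
      ∀ f : StrongDual 𝕜 E,
        Tendsto (fun n : ℕ => (∑ k ∈ Icc 1 n, ‖f ((T ^ k) x)‖) / n) atTop (𝓝 0),
      Tendsto (fun n : ℕ => ‖(T ^ n) x‖) atTop (𝓝 0)] := by
  have tendsto_dual (h : Tendsto (fun n : ℕ => ‖(T ^ n) x‖) atTop (𝓝 0)) (f : StrongDual 𝕜 E) :
      Tendsto (fun n : ℕ => f ((T ^ n) x)) atTop (𝓝 0) :=
    (f.continuous.tendsto' 0 0 (map_zero f)).comp (tendsto_zero_iff_norm_tendsto_zero.2 h)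
  tfae_have 1 → 4 := fun h => tendsto_zero_iff_norm_tendsto_zero.1 <|
    mem_stableSubspace.1 (mem_stableSubspace_of_isCompactOperator_aeval hT hp hpT h)
  tfae_have 4 → 2 := fun h => ⟨id, strictMono_id, tendsto_dual h⟩
  tfae_have 4 → 3 := fun h f =>
    tendsto_cesaro_Icc (tendsto_zero_iff_norm_tendsto_zero.1 (tendsto_dual h f))
  tfae_have 2 → 1 := fun ⟨_, _, hn⟩ => zero_mem_weakClosure_range_of_tendsto_subseq hn
  tfae_have 3 → 1 := zero_mem_weakClosure_range_of_tendsto_cesaro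
  tfae_finish

end PolynomiallyCompact

/-- Let `X` be a Banach space over `𝕜` (`𝕜 = ℝ` or `ℂ`) and `T = α·I + S`
power-bounded with `S^k` compact for some `k ≥ 1`. Then for every `x ∈ X` the following are
equivalent: (i) some subsequence of `(Tⁿ x)` converges weakly to `0`;
(ii) `(1/n) ∑_{k=1}^n |⟨x*, Tᵏ x⟩| → 0` for every `x* ∈ X*`; (iii) `‖Tⁿ x‖ → 0`. -/
theorem real_stability_scalar_plus_compact_power {𝕜 : Type*} [RCLike 𝕜]
    {X : Type*} [NormedAddCommGroup X] [NormedSpace 𝕜 X] [CompleteSpace X]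
    (α : 𝕜) (S : X →L[𝕜] X) (k : ℕ) (hk : 1 ≤ k)
    (hS : IsCompactOperator (S ^ k : X →L[𝕜] X))
    (T : X →L[𝕜] X) (hT : T = α • (1 : X →L[𝕜] X) + S)
    (hpb : ∃ C : ℝ, ∀ n : ℕ, ‖T ^ n‖ ≤ C) (x : X) :
    ((∃ n : ℕ → ℕ, StrictMono n ∧ ∀ f : StrongDual 𝕜 X,
        Tendsto (fun j : ℕ => f ((T ^ n j) x)) atTop (nhds 0)) ↔
      (∀ f : StrongDual 𝕜 X,
        Tendsto (fun n : ℕ => (∑ k ∈ Icc 1 n, ‖f ((T ^ k) x)‖) / n) atTop (nhds 0))) ∧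
    ((∀ f : StrongDual 𝕜 X,
        Tendsto (fun n : ℕ => (∑ k ∈ Icc 1 n, ‖f ((T ^ k) x)‖) / n) atTop (nhds 0)) ↔
      Tendsto (fun n : ℕ => ‖(T ^ n) x‖) atTop (nhds 0)) := by
  have hS_eq : S = aeval T (Polynomial.X - C α) := by simp [hT, Algebra.algebraMap_eq_smul_one]
  have tfae := real_stability_scalar_plus_compact_power_general hpb
    (pow_ne_zero k (X_sub_C_ne_zero α)) (by rwa [map_pow, ← hS_eq]) x
  exact ⟨tfae.out 1 2, tfae.out 2 3⟩
end

section
/- Let X be a reflexive Banach space over 𝕜 (𝕜 = ℝ or ℂ), let T be a power-bounded operator on X, and let E : X → X be a bounded operator such that (1/n) ∑_{k=1}^n T^k x → E x in norm for every x ∈ X (the ergodic projection of T). Then T is weakly mixing if and only if T* is weakly mixing with ergodic projection E*; that is, [for every x ∈ X and x* ∈ X*: (1/n) ∑_{k=1}^n |⟨x*, T^k(x − Ex)⟩| → 0] holds if and only if [for every x* ∈ X* and every Φ ∈ X**: (1/n) ∑_{k=1}^n |⟨Φ, T*^k(x* − E*x*)⟩| → 0] holds. -/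
open Filter Finset

/-- The Banach-space adjoint of `T`, acting on the dual space: `T* f = f ∘ T`. -/
noncomputable def banachAdjoint {𝕜 : Type*} [RCLike 𝕜] {X : Type*} [NormedAddCommGroup X]
    [NormedSpace 𝕜 X] (T : X →L[𝕜] X) :
    StrongDual 𝕜 X →L[𝕜] StrongDual 𝕜 X :=
  (ContinuousLinearMap.compL 𝕜 X X 𝕜).flip T

/-!
The limit `E` of the Cesàro averages of `T` commutes with `T`. Hence, for `x` in `X` and `f` in its
dual, `⟨T*ᵏ(f - E*f), x⟩ = ⟨f, Tᵏ(x - Ex)⟩`: the averages which have to tend to zero for `T` and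
for `T*` agree term by term when the bidual is tested only on evaluations at points of `X`, and by
reflexivity there is nothing else in the bidual.
-/

section Commutation

variable {R M : Type*} [DivisionRing R] [AddCommMonoid M] [Module R M] [TopologicalSpace M]
  [T2Space M]

theorem commute_of_tendsto_cesaro {T E : M →L[R] M}
    (hE : ∀ x, Tendsto (fun n : ℕ => (n : R)⁻¹ • ∑ k ∈ Icc 1 n, (T ^ k) x) atTop (nhds (E x))) :
    Commute T E := by
  ext x
  refine tendsto_nhds_unique (((T.continuous.tendsto (E x)).comp (hE x)).congr fun n => ?_)
    (hE (T x))
  have shift (k : ℕ) : T ((T ^ k) x) = (T ^ k) (T x) :=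
    DFunLike.congr_fun (Commute.self_pow T k).eq x
  simp only [Function.comp_apply, map_smul, map_sum, shift]

end Commutation

/-- `T` is weakly mixing, with `E` in the role of its ergodic projection. That `E` is the limit of
the Cesàro averages of `T` is not part of the definition. -/
def IsWeaklyMixing {𝕜 X : Type*} [NontriviallyNormedField 𝕜] [SeminormedAddCommGroup X]
    [NormedSpace 𝕜 X] (T E : X →L[𝕜] X) : Prop :=
  ∀ x : X, ∀ f : StrongDual 𝕜 X,
    Tendsto (fun n : ℕ => (∑ k ∈ Icc 1 n, ‖f ((T ^ k) (x - E x))‖) / n) atTop (nhds 0)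

section Adjoint

variable {𝕜 X : Type*} [RCLike 𝕜] [NormedAddCommGroup X] [NormedSpace 𝕜 X] {T E : X →L[𝕜] X}

theorem banachAdjoint_apply (T : X →L[𝕜] X) (f : StrongDual 𝕜 X) (x : X) :
    banachAdjoint T f x = f (T x) :=
  rfl

theorem banachAdjoint_pow_apply (T : X →L[𝕜] X) (k : ℕ) (f : StrongDual 𝕜 X) (x : X) :
    (banachAdjoint T ^ k) f x = f ((T ^ k) x) := by
  induction k generalizing f with
  | zero => rfl
  | succ k ih =>
    rw [pow_succ, pow_succ', mul_apply_eq_comp, mul_apply_eq_comp, ih, banachAdjoint_apply]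

theorem banachAdjoint_pow_sub_apply (hTE : Commute T E) (k : ℕ) (f : StrongDual 𝕜 X) (x : X) :
    (banachAdjoint T ^ k) (f - banachAdjoint E f) x = f ((T ^ k) (x - E x)) := by
  have hcomm : (T ^ k) (E x) = E ((T ^ k) x) := DFunLike.congr_fun (hTE.pow_left k).eq x
  rw [banachAdjoint_pow_apply, sub_apply, banachAdjoint_apply, map_sub, map_sub, hcomm]

theorem IsWeaklyMixing.of_adjoint (hTE : Commute T E)
    (h : IsWeaklyMixing (banachAdjoint T) (banachAdjoint E)) : IsWeaklyMixing T E := fun x f => by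
  simpa only [NormedSpace.dual_def, banachAdjoint_pow_sub_apply hTE]
    using h f (NormedSpace.inclusionInDoubleDual 𝕜 X x)

theorem IsWeaklyMixing.adjoint
    (hrefl : Function.Surjective (NormedSpace.inclusionInDoubleDual 𝕜 X)) (hTE : Commute T E)
    (h : IsWeaklyMixing T E) : IsWeaklyMixing (banachAdjoint T) (banachAdjoint E) := fun f Φ => by
  obtain ⟨x, rfl⟩ := hrefl Φ
  simpa only [NormedSpace.dual_def, banachAdjoint_pow_sub_apply hTE] using h x f

theorem weakMixing_iff_adjoint_weakMixing_general
    (hrefl : Function.Surjective (NormedSpace.inclusionInDoubleDual 𝕜 X)) (hTE : Commute T E) :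
    IsWeaklyMixing T E ↔ IsWeaklyMixing (banachAdjoint T) (banachAdjoint E) :=
  ⟨IsWeaklyMixing.adjoint hrefl hTE, IsWeaklyMixing.of_adjoint hTE⟩

end Adjoint

/-- Let `X` be a reflexive Banach space over `𝕜` (`ℝ` or `ℂ`), `T`
power-bounded with ergodic projection `E`. Then `T` is weakly mixing iff its adjoint `T*`
is weakly mixing (with ergodic projection `E*`). -/
theorem weakMixing_iff_adjoint_weakMixing {𝕜 : Type*} [RCLike 𝕜]
    {X : Type*} [NormedAddCommGroup X] [NormedSpace 𝕜 X] [CompleteSpace X]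
    (hrefl : Function.Bijective (NormedSpace.inclusionInDoubleDual 𝕜 X))
    (T : X →L[𝕜] X) (hpb : ∃ C : ℝ, ∀ n : ℕ, ‖T ^ n‖ ≤ C)
    (E : X →L[𝕜] X)
    (hE : ∀ x : X, Tendsto (fun n : ℕ => (n : 𝕜)⁻¹ • ∑ k ∈ Icc 1 n, (T ^ k) x)
      atTop (nhds (E x))) :
    (∀ x : X, ∀ f : StrongDual 𝕜 X,
        Tendsto (fun n : ℕ => (∑ k ∈ Icc 1 n, ‖f ((T ^ k) (x - E x))‖) / n) atTop (nhds 0)) ↔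
    (∀ f : StrongDual 𝕜 X, ∀ Φ : StrongDual 𝕜 (StrongDual 𝕜 X),
        Tendsto (fun n : ℕ =>
            (∑ k ∈ Icc 1 n, ‖Φ ((banachAdjoint T ^ k) (f - banachAdjoint E f))‖) / n)
          atTop (nhds 0)) :=
  weakMixing_iff_adjoint_weakMixing_general hrefl.surjective (commute_of_tendsto_cesaro hE)
end
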